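/- Uniform Sobolev bound on a short time interval, horizontal resistivity: Let s > 2, μ > 0, and M > 0. There exist T > 0 and C ≥ 1, depending only on s, μ and M, with the following property. If a, b : [0,T') × ℝ² → ℝ (for any T' > 0) are smooth functions such that a(t,·) and b(t,·) are Schwartz functions for each t (with all Schwartz seminorms locally bounded in t), (a,b) solves pointwise the system ∂ₜa + (∂_y a)(∂_x b) − (∂_x a)(∂_y b) = μΔa, ∂ₜb − (∂_y a)∂_xΔa + (∂_x a)∂_yΔa = 0, and ‖a(0)‖_{H^{s+1}}² + ‖b(0)‖_{H^{s}}² ≤ M, then for all t ∈ [0, min(T, T')), ‖a(t)‖_{H^{s+1}}² + ‖b(t)‖_{H^{s}}² ≤ C ( ‖a(0)‖_{H^{s+1}}² + ‖b(0)‖_{H^{s}}² ). -/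

import Mathlib

open MeasureTheory Real
open scoped FourierTransform

noncomputable section

/-- The plane `ℝ²`. -/
abbrev Plane := EuclideanSpace ℝ (Fin 2)

/-- Partial derivative in the coordinate direction `i` (`i = 0` is `x`, `i = 1` is `y`). -/
def pd (i : Fin 2) (f : Plane → ℝ) (x : Plane) : ℝ :=
  fderiv ℝ f x (EuclideanSpace.single i 1)

/-- The Laplacian `Δ = ∂ₓₓ + ∂_yy` on the plane. -/
def lap (f : Plane → ℝ) (x : Plane) : ℝ :=
  pd 0 (pd 0 f) x + pd 1 (pd 1 f) x

/-- The Sobolev `H^s` norm, `‖f‖_{H^s} = ‖ξ ↦ (1+|ξ|²)^{s/2} (𝓕f)(ξ)‖_{L²}`, written via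
the Fourier integral (which is well defined e.g. for Schwartz functions). -/
def sobNorm (s : ℝ) (f : Plane → ℝ) : ℝ :=
  (∫ ξ : Plane, (1 + ‖ξ‖ ^ 2) ^ s * ‖𝓕 (fun x => (f x : ℂ)) ξ‖ ^ 2) ^ (1/2 : ℝ)

lemma rpow_sub_le_aux {p x y : ℝ} (hp : 1 ≤ p) (hy : 1 ≤ y) (hxy : y ≤ x) :
    x ^ p - y ^ p ≤ p * (x - y) * x ^ (p - 1) := by
  have hx : 0 < x := by linarith
  have h := one_add_mul_self_le_rpow_one_add (s := y / x - 1) (by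
    have : 0 ≤ y / x := by positivity
    linarith) hp
  have h2 : 1 + (y / x - 1) = y / x := by ring
  rw [h2, Real.div_rpow (by linarith) hx.le] at h
  have hxp : 0 < x ^ p := Real.rpow_pos_of_pos hx p
  have h3 : x ^ p = x ^ (p - 1) * x := by
    rw [← Real.rpow_add_one hx.ne']; congr 1; ring
  rw [le_div_iff₀ hxp] at h
  have h4 : p * (x - y) * x ^ (p - 1) = - (p * (y / x - 1)) * x ^ p := by
    rw [h3]; field_simp; ring
  rw [h4]; linarith

lemma kernel_real (s : ℝ) (hs : 2 < s) (x y z m : ℝ) (hx : 1 ≤ x) (hy : 1 ≤ y) (hz : 1 ≤ z)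
    (hxyz : x - y ≤ z) (hyxz : y - x ≤ z) (hm0 : 0 ≤ m) (hmx : m ≤ z * x) (hmy : m ≤ z * y) :
    m * |(x ^ 2 - 1) * y ^ (2 * s) - x ^ (2 * s + 2)| ≤
      ((2 * s + 1) * 2 ^ (2 * s)) * (z ^ (s + 1) * y ^ s * x ^ (s + 2)) *
        (z ^ (1 - s) + y ^ (1 - s) + x ^ (1 - s)) := by
  have x0 : 0 < x := by linarith
  have y0 : 0 < y := by linarith
  have z0 : 0 < z := by linarith
  have e0 : x ^ (2 * s + 2) = x ^ 2 * x ^ (2 * s) := by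
    rw [Real.rpow_add x0, mul_comm]; norm_num
  have habs : |(x ^ 2 - 1) * y ^ (2 * s) - x ^ (2 * s + 2)| ≤
      x ^ 2 * |y ^ (2 * s) - x ^ (2 * s)| + y ^ (2 * s) := by
    have : (x ^ 2 - 1) * y ^ (2 * s) - x ^ (2 * s + 2) =
      x ^ 2 * (y ^ (2 * s) - x ^ (2 * s)) - y ^ (2 * s) := by rw [e0]; ring
    rw [this]
    refine (abs_sub _ _).trans ?_
    rw [abs_mul, abs_of_nonneg (sq_nonneg x), abs_of_nonneg (Real.rpow_nonneg y0.le _)]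
  refine (mul_le_mul_of_nonneg_left habs hm0).trans ?_
  have r1 : z ^ (s + 1) * z ^ (1 - s) = z ^ 2 := by
    rw [← Real.rpow_add z0, ← Real.rpow_natCast]; congr 1; push_cast; ring
  have r2 : y ^ s * y ^ (1 - s) = y := by
    rw [← Real.rpow_add y0]; simp
  have r3 : x ^ (s + 2) * x ^ (1 - s) = x ^ 3 := by
    rw [← Real.rpow_add x0, ← Real.rpow_natCast]; congr 1; push_cast; ring
  have R : z ^ (s + 1) * y ^ s * x ^ (s + 2) * (z ^ (1 - s) + y ^ (1 - s) + x ^ (1 - s)) =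
      z ^ 2 * y ^ s * x ^ (s + 2) + z ^ (s + 1) * y * x ^ (s + 2) + z ^ (s + 1) * y ^ s * x ^ 3 := by
    have : z ^ (s + 1) * y ^ s * x ^ (s + 2) * (z ^ (1 - s) + y ^ (1 - s) + x ^ (1 - s)) =
      (z ^ (s + 1) * z ^ (1 - s)) * y ^ s * x ^ (s + 2) + z ^ (s + 1) * (y ^ s * y ^ (1 - s)) * x ^ (s + 2)
       + z ^ (s + 1) * y ^ s * (x ^ (s + 2) * x ^ (1 - s)) := by ring
    rw [this, r1, r2, r3]
  rw [mul_assoc ((2 * s + 1) * 2 ^ (2 * s)), R]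
  have p1 : 0 ≤ z ^ 2 * y ^ s * x ^ (s + 2) := by positivity
  have p2 : 0 ≤ z ^ (s + 1) * y * x ^ (s + 2) := by positivity
  have p3 : 0 ≤ z ^ (s + 1) * y ^ s * x ^ 3 := by positivity
  have c0 : (1:ℝ) ≤ 2 ^ (2 * s) := Real.one_le_rpow (by norm_num) (by linarith)
  have cs : (2:ℝ) ^ s ≤ 2 ^ (2 * s) := Real.rpow_le_rpow_of_exponent_le (by norm_num) (by linarith)
  have cs0 : (0:ℝ) < 2 ^ s := by positivity
  have ez : z ^ (s + 1) = z * z ^ s := by rw [Real.rpow_add_one z0.ne', mul_comm]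
  have ex : x ^ (s + 2) = x ^ 2 * x ^ s := by
    rw [Real.rpow_add x0, mul_comm]; norm_num
  have ex2 : x ^ (2 * s) = x ^ s * x ^ s := by rw [← Real.rpow_add x0]; congr 1; ring
  have ey2 : y ^ (2 * s) = y ^ s * y ^ s := by rw [← Real.rpow_add y0]; congr 1; ring
  have hxs : 1 ≤ x ^ s := Real.one_le_rpow hx (by linarith)
  have hys : 1 ≤ y ^ s := Real.one_le_rpow hy (by linarith)
  have hx2 : 1 ≤ x ^ 2 := by nlinarith
  rcases lt_or_ge (2 * y) x with hB | hB
  · -- case B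
    have hxz : x ≤ 2 * z := by linarith
    have hle : y ^ (2 * s) ≤ x ^ (2 * s) :=
      Real.rpow_le_rpow y0.le (by linarith) (by linarith)
    have hab : |y ^ (2 * s) - x ^ (2 * s)| ≤ x ^ (2 * s) := by
      rw [abs_le]
      have : 0 ≤ y ^ (2 * s) := by positivity
      constructor <;> linarith
    have hxs2 : x ^ s ≤ 2 ^ s * z ^ s := by
      rw [← Real.mul_rpow (by norm_num) z0.le]
      exact Real.rpow_le_rpow x0.le hxz (by linarith)
    have hin : x ^ 2 * |y ^ (2 * s) - x ^ (2 * s)| + y ^ (2 * s) ≤ 2 * (x ^ 2 * (x ^ s * (2 ^ s * z ^ s))) := by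
      have h1 : x ^ 2 * |y ^ (2 * s) - x ^ (2 * s)| ≤ x ^ 2 * x ^ (2 * s) := by gcongr
      have h2 : y ^ (2 * s) ≤ x ^ 2 * x ^ (2 * s) :=
        hle.trans (le_mul_of_one_le_left (by positivity) hx2)
      have h3 : x ^ 2 * x ^ (2 * s) ≤ x ^ 2 * (x ^ s * (2 ^ s * z ^ s)) := by
        rw [ex2]; gcongr
      linarith
    calc _ ≤ (z * y) * (2 * (x ^ 2 * (x ^ s * (2 ^ s * z ^ s)))) := by gcongr
      _ = (2 * 2 ^ s) * (z ^ (s + 1) * y * x ^ (s + 2)) := by rw [ez, ex]; ring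
      _ ≤ ((2 * s + 1) * 2 ^ (2 * s)) * (z ^ (s + 1) * y * x ^ (s + 2)) := by
        gcongr; linarith
      _ ≤ _ := by
        apply mul_le_mul_of_nonneg_left _ (by positivity); linarith
  rcases lt_or_ge (2 * x) y with hC | hC
  · have hyz : y ≤ 2 * z := by linarith
    have hle : x ^ (2 * s) ≤ y ^ (2 * s) :=
      Real.rpow_le_rpow x0.le (by linarith) (by linarith)
    have hab : |y ^ (2 * s) - x ^ (2 * s)| ≤ y ^ (2 * s) := by
      rw [abs_le]
      have : 0 ≤ x ^ (2 * s) := by positivity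
      constructor <;> linarith
    have hys2 : y ^ s ≤ 2 ^ s * z ^ s := by
      rw [← Real.mul_rpow (by norm_num) z0.le]
      exact Real.rpow_le_rpow y0.le hyz (by linarith)
    have hin : x ^ 2 * |y ^ (2 * s) - x ^ (2 * s)| + y ^ (2 * s) ≤ 2 * (x ^ 2 * (y ^ s * (2 ^ s * z ^ s))) := by
      have h1 : x ^ 2 * |y ^ (2 * s) - x ^ (2 * s)| ≤ x ^ 2 * y ^ (2 * s) := by gcongr
      have h2 : y ^ (2 * s) ≤ x ^ 2 * y ^ (2 * s) := le_mul_of_one_le_left (by positivity) hx2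
      have h3 : x ^ 2 * y ^ (2 * s) ≤ x ^ 2 * (y ^ s * (2 ^ s * z ^ s)) := by
        rw [ey2]; gcongr
      linarith
    calc _ ≤ (z * x) * (2 * (x ^ 2 * (y ^ s * (2 ^ s * z ^ s)))) := by gcongr
      _ = (2 * 2 ^ s) * (z ^ (s + 1) * y ^ s * x ^ 3) := by rw [ez]; ring
      _ ≤ ((2 * s + 1) * 2 ^ (2 * s)) * (z ^ (s + 1) * y ^ s * x ^ 3) := by
        gcongr; linarith
      _ ≤ _ := by
        apply mul_le_mul_of_nonneg_left _ (by positivity); linarith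
  · -- case A
    have h2s : (2:ℝ) ^ (2 * s) = 2 * 2 ^ (s - 1) * 2 ^ s := by
      rw [mul_assoc, ← Real.rpow_add (by norm_num), ← Real.rpow_one_add' (by norm_num) (by linarith)]
      congr 1; ring
    have exs : x ^ s = x * x ^ (s - 1) := by
      rw [← Real.rpow_one_add' x0.le (by linarith)]; congr 1; ring
    have key : |y ^ (2 * s) - x ^ (2 * s)| ≤ 2 * s * z * ((2 ^ (s - 1) * x ^ (s - 1)) * (2 ^ s * y ^ s)) := by
      have gen : ∀ M, 0 < M → M ≤ 2 * x → M ≤ 2 * y →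
          M ^ (2 * s - 1) ≤ (2 ^ (s - 1) * x ^ (s - 1)) * (2 ^ s * y ^ s) := by
        intro M hM h1 h2
        rw [← Real.mul_rpow (by norm_num) x0.le, ← Real.mul_rpow (by norm_num) y0.le]
        have : 2 * s - 1 = (s - 1) + s := by ring
        rw [this, Real.rpow_add hM]
        gcongr <;> linarith
      rcases le_total x y with h | h
      · rw [abs_of_nonneg (by
          have := Real.rpow_le_rpow x0.le h (by linarith : 0 ≤ 2 * s)
          linarith)]
        refine (rpow_sub_le_aux (by linarith) hx h).trans ?_
        have := gen y y0 hC (by linarith)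
        gcongr
      · rw [abs_sub_comm, abs_of_nonneg (by
          have := Real.rpow_le_rpow y0.le h (by linarith : 0 ≤ 2 * s)
          linarith)]
        refine (rpow_sub_le_aux (by linarith) hy h).trans ?_
        have := gen x x0 (by linarith) hB
        gcongr
    have hys2 : y ^ s ≤ 2 ^ s * x ^ s := by
      rw [← Real.mul_rpow (by norm_num) x0.le]
      exact Real.rpow_le_rpow y0.le hC (by linarith)
    have hT2 : m * y ^ (2 * s) ≤ 2 ^ (2 * s) * (z ^ 2 * y ^ s * x ^ (s + 2)) := by
      calc m * y ^ (2 * s) ≤ (z * x) * (y ^ s * (2 ^ s * x ^ s)) := by rw [ey2]; gcongr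
        _ = (z * 1) * y ^ s * ((x * 1) * x ^ s) * 2 ^ s := by ring
        _ ≤ (z * z) * y ^ s * ((x * x) * x ^ s) * 2 ^ (2 * s) := by gcongr
        _ = _ := by rw [ex]; ring
    have hT1 : m * (x ^ 2 * |y ^ (2 * s) - x ^ (2 * s)|) ≤ 2 * s * 2 ^ (2 * s) * (z ^ 2 * y ^ s * x ^ (s + 2)) := by
      calc m * (x ^ 2 * |y ^ (2 * s) - x ^ (2 * s)|) ≤
          (z * x) * (x ^ 2 * (2 * s * z * ((2 ^ (s - 1) * x ^ (s - 1)) * (2 ^ s * y ^ s)))) := by gcongr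
        _ = s * 2 ^ (2 * s) * (z ^ 2 * y ^ s * x ^ (s + 2)) := by rw [h2s, ex, exs]; ring
        _ ≤ _ := by gcongr; linarith
    rw [mul_add]
    have : ((2 * s + 1) * 2 ^ (2 * s)) * (z ^ 2 * y ^ s * x ^ (s + 2)) ≤ ((2 * s + 1) * 2 ^ (2 * s)) *
      (z ^ 2 * y ^ s * x ^ (s + 2) + z ^ (s + 1) * y * x ^ (s + 2) + z ^ (s + 1) * y ^ s * x ^ 3) := by
      apply mul_le_mul_of_nonneg_left _ (by positivity); linarith
    linarith

/-- Japanese bracket. -/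
def jb (ξ : Plane) : ℝ := √(1 + ‖ξ‖ ^ 2)

/-- Wedge product of plane vectors. -/
def wd (ξ η : Plane) : ℝ := ξ 0 * η 1 - ξ 1 * η 0

lemma jb_sq (ξ : Plane) : jb ξ ^ 2 = 1 + ‖ξ‖ ^ 2 := Real.sq_sqrt (by positivity)

lemma one_le_jb (ξ : Plane) : 1 ≤ jb ξ := by
  rw [jb, Real.one_le_sqrt]; nlinarith [sq_nonneg ‖ξ‖]

lemma jb_pos (ξ : Plane) : 0 < jb ξ := lt_of_lt_of_le one_pos (one_le_jb ξ)

lemma norm_le_jb (ξ : Plane) : ‖ξ‖ ≤ jb ξ := by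
  apply Real.le_sqrt_of_sq_le; linarith

lemma jb_le (ξ : Plane) : jb ξ ≤ 1 + ‖ξ‖ := by
  rw [jb, Real.sqrt_le_left (by positivity)]; nlinarith [norm_nonneg ξ]

lemma continuous_jb : Continuous jb := by unfold jb; fun_prop

lemma rpow_jb (ξ : Plane) (r : ℝ) : (1 + ‖ξ‖ ^ 2) ^ r = jb ξ ^ (2 * r) := by
  rw [← jb_sq, ← Real.rpow_natCast, ← Real.rpow_mul (jb_pos ξ).le]; norm_num

lemma jb_sub_le (ξ η : Plane) : jb ξ - jb η ≤ ‖ξ - η‖ := by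
  have h1 := jb_sq ξ
  have h2 := jb_sq η
  have h3 : ‖ξ‖ ≤ ‖η‖ + ‖ξ - η‖ := by
    have := norm_add_le η (ξ - η); simpa using this
  have h4 := norm_le_jb η
  have h5 := norm_nonneg (ξ - η)
  have h6 := norm_nonneg ξ
  have h7 := norm_nonneg η
  have h8 := jb_pos ξ
  have h9 := jb_pos η
  by_contra hc
  push Not at hc
  have : (jb η + ‖ξ - η‖) ^ 2 < jb ξ ^ 2 := by
    apply pow_lt_pow_left₀ (by linarith) (by positivity) (by norm_num)
  nlinarith

lemma wd_abs_le (ξ η : Plane) : |wd ξ η| ≤ ‖ξ‖ * ‖η‖ := by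
  have h1 : ‖ξ‖ ^ 2 = ξ 0 ^ 2 + ξ 1 ^ 2 := by
    rw [EuclideanSpace.norm_sq_eq]; simp
  have h2 : ‖η‖ ^ 2 = η 0 ^ 2 + η 1 ^ 2 := by
    rw [EuclideanSpace.norm_sq_eq]; simp
  apply abs_le_of_sq_le_sq _ (by positivity)
  rw [mul_pow, h1, h2, wd]
  nlinarith [sq_nonneg (ξ 0 * η 0 + ξ 1 * η 1)]

lemma wd_sub (ξ η : Plane) : wd ξ η = wd (ξ - η) η := by
  simp [wd]; ring

lemma wd_sub' (ξ η : Plane) : wd ξ η = wd (ξ - η) ξ := by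
  simp [wd]; ring

lemma wd_swap (ξ η : Plane) : wd η ξ = - wd ξ η := by
  simp [wd]; ring

lemma wd_le_left (ξ η : Plane) : |wd ξ η| ≤ jb (ξ - η) * jb ξ := by
  rw [wd_sub']
  exact (wd_abs_le _ _).trans (mul_le_mul (norm_le_jb _) (norm_le_jb _) (norm_nonneg _) (jb_pos _).le)

lemma wd_le_right (ξ η : Plane) : |wd ξ η| ≤ jb (ξ - η) * jb η := by
  rw [wd_sub]
  exact (wd_abs_le _ _).trans (mul_le_mul (norm_le_jb _) (norm_le_jb _) (norm_nonneg _) (jb_pos _).le)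

lemma wd_le (ξ η : Plane) : |wd ξ η| ≤ jb ξ * jb η :=
  (wd_abs_le _ _).trans (mul_le_mul (norm_le_jb _) (norm_le_jb _) (norm_nonneg _) (jb_pos _).le)

lemma continuous_wd : Continuous (fun p : Plane × Plane => wd p.1 p.2) := by
  unfold wd; fun_prop

lemma kernel_bound (s : ℝ) (hs : 2 < s) (ξ η : Plane) :
    |wd ξ η| * |‖ξ‖ ^ 2 * jb η ^ (2 * s) - jb ξ ^ (2 * s + 2)| ≤
      ((2 * s + 1) * 2 ^ (2 * s)) * (jb (ξ - η) ^ (s + 1) * jb η ^ s * jb ξ ^ (s + 2)) *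
        (jb (ξ - η) ^ (1 - s) + jb η ^ (1 - s) + jb ξ ^ (1 - s)) := by
  have h : ‖ξ‖ ^ 2 = jb ξ ^ 2 - 1 := by rw [jb_sq]; ring
  rw [h]
  apply kernel_real s hs _ _ _ _ (one_le_jb _) (one_le_jb _) (one_le_jb _)
  · exact (jb_sub_le _ _).trans (norm_le_jb _)
  · refine (jb_sub_le _ _).trans ?_
    rw [norm_sub_rev]; exact norm_le_jb _
  · positivity
  · exact wd_le_left _ _
  · exact wd_le_right _ _

open scoped ENNReal

/-- L² norm in `ℝ≥0∞`. -/
def N2 (f : Plane → ℝ≥0∞) : ℝ≥0∞ := (∫⁻ x, f x ^ (2:ℝ)) ^ (1 / (2:ℝ))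

lemma cs_N2 {f g : Plane → ℝ≥0∞} (hf : Measurable f) (hg : Measurable g) :
    ∫⁻ x, f x * g x ≤ N2 f * N2 g :=
  ENNReal.lintegral_mul_le_Lp_mul_Lq volume (Real.HolderConjugate.two_two)
    hf.aemeasurable hg.aemeasurable

lemma N2_sub_right (f : Plane → ℝ≥0∞) (η : Plane) : N2 (fun ξ => f (ξ - η)) = N2 f := by
  unfold N2
  rw [lintegral_sub_right_eq_self (fun x => f x ^ (2:ℝ)) η]

lemma N2_sub_left (f : Plane → ℝ≥0∞) (ξ : Plane) : N2 (fun η => f (ξ - η)) = N2 f := by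
  unfold N2
  rw [lintegral_sub_left_eq_self (fun x => f x ^ (2:ℝ)) ξ]


lemma tri3 {f g h p : Plane → ℝ≥0∞} (hf : Measurable f) (hg : Measurable g)
  (hh : Measurable h) (hp : Measurable p) :
    ∫⁻ ξ, ∫⁻ η, f (ξ - η) * g η * h ξ * p ξ ≤ N2 p * N2 f * N2 g * N2 h := by
  calc ∫⁻ ξ, ∫⁻ η, f (ξ - η) * g η * h ξ * p ξ
      ≤ ∫⁻ ξ, (N2 f * N2 g) * (h ξ * p ξ) := by
        apply lintegral_mono; intro ξ
        have : (fun η => f (ξ - η) * g η * h ξ * p ξ) = fun η => (f (ξ - η) * g η) * (h ξ * p ξ) := by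
          ext; ring
        simp only [this]
        rw [lintegral_mul_const _ (by fun_prop)]
        gcongr
        rw [← N2_sub_left f ξ]
        exact cs_N2 (by fun_prop) hg
    _ = (N2 f * N2 g) * ∫⁻ ξ, h ξ * p ξ := lintegral_const_mul _ (by fun_prop)
    _ ≤ (N2 f * N2 g) * (N2 h * N2 p) := by gcongr; exact cs_N2 hh hp
    _ = _ := by ring

lemma tri2 {f g h p : Plane → ℝ≥0∞} (hf : Measurable f) (hg : Measurable g)
  (hh : Measurable h) (hp : Measurable p) :
    ∫⁻ ξ, ∫⁻ η, f (ξ - η) * g η * h ξ * p η ≤ N2 p * N2 f * N2 g * N2 h := by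
  rw [lintegral_lintegral_swap (by fun_prop)]
  calc ∫⁻ η, ∫⁻ ξ, f (ξ - η) * g η * h ξ * p η
      ≤ ∫⁻ η, (N2 f * N2 h) * (g η * p η) := by
        apply lintegral_mono; intro η
        have : (fun ξ => f (ξ - η) * g η * h ξ * p η) = fun ξ => (f (ξ - η) * h ξ) * (g η * p η) := by
          ext; ring
        simp only [this]
        rw [lintegral_mul_const _ (by fun_prop)]
        gcongr
        rw [← N2_sub_right f η]
        exact cs_N2 (by fun_prop) hh
    _ = (N2 f * N2 h) * ∫⁻ ξ, g ξ * p ξ := lintegral_const_mul _ (by fun_prop)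
    _ ≤ (N2 f * N2 h) * (N2 g * N2 p) := by gcongr; exact cs_N2 hg hp
    _ = _ := by ring

lemma tri1 {f g h p : Plane → ℝ≥0∞} (hf : Measurable f) (hg : Measurable g)
  (hh : Measurable h) (hp : Measurable p) :
    ∫⁻ ξ, ∫⁻ η, f (ξ - η) * g η * h ξ * p (ξ - η) ≤ N2 p * N2 f * N2 g * N2 h := by
  calc ∫⁻ ξ, ∫⁻ η, f (ξ - η) * g η * h ξ * p (ξ - η)
      = ∫⁻ ξ, ∫⁻ ζ, f ζ * g (ξ - ζ) * h ξ * p ζ := by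
        apply lintegral_congr; intro ξ
        rw [← lintegral_sub_left_eq_self (fun ζ => f ζ * g (ξ - ζ) * h ξ * p ζ) ξ]
        simp
    _ = ∫⁻ ξ, ∫⁻ ζ, g (ξ - ζ) * f ζ * h ξ * p ζ := by
        simp only [mul_comm (f _) (g _)]
    _ ≤ N2 p * N2 g * N2 f * N2 h := tri2 hg hf hh hp
    _ = _ := by ring


open scoped ENNReal ComplexConjugate

/-- Continuous and rapidly decaying. -/
def RD (f : Plane → ℂ) : Prop :=
  Continuous f ∧ ∀ n : ℕ, ∃ K : ℝ, ∀ ξ, jb ξ ^ n * ‖f ξ‖ ≤ K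

lemma decay_rpow {f : Plane → ℂ} {n : ℕ} {K r : ℝ} (hr : r ≤ n) {ξ : Plane}
    (h : jb ξ ^ n * ‖f ξ‖ ≤ K) : ‖f ξ‖ ≤ K * jb ξ ^ (-r) := by
  have hj := jb_pos ξ
  rw [Real.rpow_neg hj.le, ← div_eq_mul_inv, le_div_iff₀ (by positivity)]
  refine le_trans ?_ h
  rw [mul_comm]
  gcongr
  rw [← Real.rpow_natCast]
  exact Real.rpow_le_rpow_of_exponent_le (one_le_jb ξ) hr

lemma RD.bound {f : Plane → ℂ} (hf : RD f) (r : ℝ) :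
    ∃ K : ℝ, 0 ≤ K ∧ ∀ ξ, ‖f ξ‖ ≤ K * jb ξ ^ (-r) := by
  obtain ⟨n, hn⟩ := exists_nat_ge r
  obtain ⟨K, hK⟩ := hf.2 n
  refine ⟨K, ?_, fun ξ => decay_rpow hn (hK ξ)⟩
  exact le_trans (mul_nonneg (pow_nonneg (jb_pos 0).le _) (norm_nonneg _)) (hK 0)

lemma continuous_jb_rpow (r : ℝ) : Continuous (fun ξ => jb ξ ^ r) :=
  continuous_jb.rpow_const (fun ξ => Or.inl (jb_pos ξ).ne')

lemma jb_rpow_add (ξ : Plane) (r q : ℝ) : jb ξ ^ r * jb ξ ^ q = jb ξ ^ (r + q) :=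
  (Real.rpow_add (jb_pos ξ) r q).symm

lemma integrable_jb {r : ℝ} (hr : 2 < r) : Integrable (fun ξ : Plane => jb ξ ^ (-r)) := by
  have := integrable_rpow_neg_one_add_norm_sq (E := Plane) (μ := volume) (r := r) (by simpa using hr)
  refine this.congr (Filter.Eventually.of_forall fun ξ => ?_)
  simp only [rpow_jb]
  congr 1; ring

lemma RD.integrable_sq {f : Plane → ℂ} (hf : RD f) (r : ℝ) :
    Integrable (fun ξ => jb ξ ^ r * ‖f ξ‖ ^ 2) := by
  obtain ⟨K, hK0, hK⟩ := hf.bound ((r + 3) / 2)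
  refine Integrable.mono' ((integrable_jb (r := 3) (by norm_num)).const_mul (K ^ 2)) ?_ ?_
  · exact ((continuous_jb_rpow r).mul (hf.1.norm.pow 2)).aestronglyMeasurable
  · refine Filter.Eventually.of_forall fun ξ => ?_
    have hj := jb_pos ξ
    rw [Real.norm_of_nonneg (by positivity)]
    calc jb ξ ^ r * ‖f ξ‖ ^ 2 ≤ jb ξ ^ r * (K * jb ξ ^ (-((r + 3) / 2))) ^ 2 := by
          gcongr; exact hK ξ
      _ = K ^ 2 * (jb ξ ^ r * (jb ξ ^ (-((r + 3) / 2)) * jb ξ ^ (-((r + 3) / 2)))) := by ring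
      _ = _ := by
        rw [jb_rpow_add, jb_rpow_add]; congr 2; ring

/-- The same with different last function. -/
def Phi3 (u v w : Plane → ℂ) (p : Plane × Plane) : ℂ :=
  (wd p.1 p.2 : ℂ) * u (p.1 - p.2) * v p.2 * conj (w p.1)

lemma continuous_Phi3 {u v w : Plane → ℂ} (hu : Continuous u) (hv : Continuous v)
    (hw : Continuous w) : Continuous (Phi3 u v w) := by
  unfold Phi3
  have h1 : Continuous (fun p : Plane × Plane => ((wd p.1 p.2 : ℝ) : ℂ)) :=
    Complex.continuous_ofReal.comp continuous_wd
  have h2 : Continuous (fun p : Plane × Plane => conj (w p.1)) :=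
    Complex.continuous_conj.comp (hw.comp continuous_fst)
  fun_prop

lemma integrable_Phi3 {u v w : Plane → ℂ} (hu : RD u) (hv : RD v) (hw : RD w)
    {c : Plane × Plane → ℝ} (hc : Continuous c) {r1 r2 : ℝ}
    (hb : ∀ p, |c p| ≤ jb p.1 ^ r1 * jb p.2 ^ r2) :
    Integrable (fun p : Plane × Plane => (c p : ℂ) * Phi3 u v w p) (volume.prod volume) := by
  obtain ⟨K1, h10, h1⟩ := hu.bound 0
  obtain ⟨K2, h20, h2⟩ := hv.bound (r2 + 4)
  obtain ⟨K3, h30, h3⟩ := hw.bound (r1 + 4)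
  have hi := (integrable_jb (r := 3) (by norm_num)).mul_prod (integrable_jb (r := 3) (by norm_num))
  refine Integrable.mono' (hi.const_mul (K1 * K2 * K3)) ?_ ?_
  · exact ((Complex.continuous_ofReal.comp hc).mul (continuous_Phi3 hu.1 hv.1 hw.1)).aestronglyMeasurable
  · refine Filter.Eventually.of_forall fun p => ?_
    have hj := jb_pos p.1
    have hj2 := jb_pos p.2
    simp only [Phi3, norm_mul, Complex.norm_real, RCLike.norm_conj, Real.norm_eq_abs]
    calc |c p| * (|wd p.1 p.2| * ‖u (p.1 - p.2)‖ * ‖v p.2‖ * ‖w p.1‖)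
        ≤ (jb p.1 ^ r1 * jb p.2 ^ r2) * ((jb p.1 * jb p.2) * K1 * (K2 * jb p.2 ^ (-(r2 + 4))) *
          (K3 * jb p.1 ^ (-(r1 + 4)))) := by
          gcongr
          · exact hb p
          · exact wd_le _ _
          · simpa using h1 (p.1 - p.2)
          · exact h2 _
          · exact h3 _
      _ = (K1 * K2 * K3) * ((jb p.1 ^ r1 * jb p.1 ^ (-(r1 + 4)) * jb p.1 ^ (1:ℝ)) *
          (jb p.2 ^ r2 * jb p.2 ^ (-(r2 + 4)) * jb p.2 ^ (1:ℝ))) := by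
          rw [Real.rpow_one, Real.rpow_one]; ring
      _ = _ := by
          simp only [jb_rpow_add]
          congr 3 <;> ring

/-- The bilinear Fourier side bracket. -/
def Q (u v : Plane → ℂ) (ξ : Plane) : ℂ := ∫ η, (wd ξ η : ℂ) * u (ξ - η) * v η

lemma RD.normsq_mul {u : Plane → ℂ} (hu : RD u) : RD (fun ξ => ((‖ξ‖ ^ 2 : ℝ) : ℂ) * u ξ) := by
  refine ⟨(Complex.continuous_ofReal.comp (by fun_prop)).mul hu.1, fun n => ?_⟩
  obtain ⟨K, hK⟩ := hu.2 (n + 2)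
  refine ⟨K, fun ξ => le_trans ?_ (hK ξ)⟩
  have hj := jb_pos ξ
  rw [norm_mul, Complex.norm_real, Real.norm_of_nonneg (by positivity), pow_add, ← mul_assoc]
  gcongr
  exact norm_le_jb ξ

/-- Fubini with Q. -/
lemma integral_Q (u v w : Plane → ℂ) (r : ℝ) :
    ∫ ξ, ((jb ξ ^ r : ℝ) : ℂ) * (conj (w ξ) * Q u v ξ) =
      ∫ ξ, ∫ η, ((jb ξ ^ r : ℝ) : ℂ) * Phi3 u v w (ξ, η) := by
  apply integral_congr_ae
  refine Filter.Eventually.of_forall fun ξ => ?_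
  simp only [Q, Phi3]
  rw [← integral_const_mul, ← integral_const_mul]
  congr 1; ext η; ring

lemma integrable_Q {u v w : Plane → ℂ} (hu : RD u) (hv : RD v) (hw : RD w) (r : ℝ) :
    Integrable (fun ξ => ((jb ξ ^ r : ℝ) : ℂ) * (conj (w ξ) * Q u v ξ)) := by
  have h := (integrable_Phi3 hu hv hw (c := fun p => jb p.1 ^ r)
    ((continuous_jb_rpow r).comp continuous_fst) (r1 := r) (r2 := 0) (fun p => by
      have hj := jb_pos p.1
      rw [abs_of_nonneg (by positivity)]; simp)).integral_prod_left
  refine h.congr (Filter.Eventually.of_forall fun ξ => ?_)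
  simp only [Q, Phi3]
  rw [← integral_const_mul, ← integral_const_mul]
  congr 1; ext η; ring

lemma conj_integral_prod (f : Plane × Plane → ℂ) :
    ∫ ξ, ∫ η, conj (f (ξ, η)) = conj (∫ ξ, ∫ η, f (ξ, η)) := by
  rw [← integral_conj]
  congr 1; ext ξ
  exact integral_conj

lemma I2_eq {u v : Plane → ℂ} (hu : RD u) (hv : RD v) (hh : ∀ ξ, u (-ξ) = conj (u ξ)) (r : ℝ) :
    ∫ ξ, ((jb ξ ^ r : ℝ) : ℂ) * (conj (v ξ) * Q u (fun ξ => ((‖ξ‖ ^ 2 : ℝ) : ℂ) * u ξ) ξ) =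
      - conj (∫ ξ, ∫ η, ((‖ξ‖ ^ 2 * jb η ^ r : ℝ) : ℂ) * Phi3 u v u (ξ, η)) := by
  rw [integral_Q, ← conj_integral_prod (fun p => ((‖p.1‖ ^ 2 * jb p.2 ^ r : ℝ) : ℂ) * Phi3 u v u p)]
  rw [integral_integral_swap]
  · rw [← integral_neg]
    congr 1; ext ξ
    rw [← integral_neg]
    congr 1; ext η
    have : u (η - ξ) = conj (u (ξ - η)) := by rw [← hh]; congr 1; abel
    simp only [Phi3, wd_swap ξ η, this, map_mul, Complex.conj_ofReal, Complex.conj_conj,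
      Complex.ofReal_mul, Complex.ofReal_neg]
    ring
  · exact integrable_Phi3 hu hu.normsq_mul hv (c := fun p => jb p.1 ^ r)
      ((continuous_jb_rpow r).comp continuous_fst) (r1 := r) (r2 := 0) (fun p => by
      have hj := jb_pos p.1
      rw [abs_of_nonneg (by positivity)]; simp)

lemma N2_eq {f : Plane → ℂ} (hf : RD f) (r : ℝ) :
    N2 (fun ξ => ENNReal.ofReal (jb ξ ^ r * ‖f ξ‖)) =
      ENNReal.ofReal (√ (∫ ξ, jb ξ ^ (2 * r) * ‖f ξ‖ ^ 2)) := by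
  have e : ∀ ξ, ENNReal.ofReal (jb ξ ^ r * ‖f ξ‖) ^ (2:ℝ) = ENNReal.ofReal (jb ξ ^ (2 * r) * ‖f ξ‖ ^ 2) := by
    intro ξ
    have hj := jb_pos ξ
    rw [ENNReal.ofReal_rpow_of_nonneg (by positivity) (by norm_num)]
    congr 1
    rw [Real.mul_rpow (by positivity) (by positivity), ← Real.rpow_mul hj.le, mul_comm r 2]
    norm_num
  unfold N2
  simp only [e]
  have hn : ∀ ξ, 0 ≤ jb ξ ^ (2 * r) * ‖f ξ‖ ^ 2 := fun ξ => by
    have hj := jb_pos ξ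
    positivity
  rw [← ofReal_integral_eq_lintegral_ofReal (hf.integrable_sq _) (Filter.Eventually.of_forall hn),
    ENNReal.ofReal_rpow_of_nonneg (integral_nonneg hn) (by norm_num), Real.sqrt_eq_rpow]

lemma N2_jb (s : ℝ) (hs : 2 < s) : N2 (fun ξ => ENNReal.ofReal (jb ξ ^ (1 - s))) ≠ ⊤ := by
  unfold N2
  apply ENNReal.rpow_ne_top_of_nonneg (by norm_num)
  have := (integrable_jb (r := 2 * s - 2) (by linarith)).lintegral_lt_top
  refine ne_of_lt (lt_of_le_of_lt (le_of_eq ?_) this)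
  congr 1; ext ξ
  have hj := jb_pos ξ
  rw [ENNReal.ofReal_rpow_of_nonneg (by positivity) (by norm_num), ← Real.rpow_mul hj.le]
  congr 2; ring

lemma ofReal_tri {c x y z a b d : ℝ} (hc : 0 ≤ c) (hx : 0 ≤ x) (hy : 0 ≤ y) (hz : 0 ≤ z)
    (ha : 0 ≤ a) (hb : 0 ≤ b) (hd : 0 ≤ d) :
    ENNReal.ofReal (c * (x * y * z * (a + b + d))) =
      ENNReal.ofReal c * (ENNReal.ofReal x * ENNReal.ofReal y * ENNReal.ofReal z * ENNReal.ofReal a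
       + ENNReal.ofReal x * ENNReal.ofReal y * ENNReal.ofReal z * ENNReal.ofReal b
       + ENNReal.ofReal x * ENNReal.ofReal y * ENNReal.ofReal z * ENNReal.ofReal d) := by
  rw [ENNReal.ofReal_mul hc, ENNReal.ofReal_mul (by positivity), ENNReal.ofReal_mul (by positivity),
    ENNReal.ofReal_mul (by positivity), ENNReal.ofReal_add (by positivity) (by positivity),
    ENNReal.ofReal_add (by positivity) (by positivity)]
  ring

lemma trilinear_bound (s : ℝ) (hs : 2 < s) : ∃ C : ℝ, 0 ≤ C ∧ ∀ u v : Plane → ℂ, RD u → RD v →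
    ‖∫ ξ, ∫ η, ((‖ξ‖ ^ 2 * jb η ^ (2 * s) - jb ξ ^ (2 * s + 2) : ℝ) : ℂ) * Phi3 u v u (ξ, η)‖ ≤
      C * (√(∫ ξ, jb ξ ^ (2 * s + 2) * ‖u ξ‖ ^ 2) * √(∫ ξ, jb ξ ^ (2 * s) * ‖v ξ‖ ^ 2) *
        √(∫ ξ, jb ξ ^ (2 * s + 4) * ‖u ξ‖ ^ 2)) := by
  set p : Plane → ℝ≥0∞ := fun ξ => ENNReal.ofReal (jb ξ ^ (1 - s)) with hp
  have hpm : Measurable p := (continuous_jb_rpow _).measurable.ennreal_ofReal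
  set C0 : ℝ := (2 * s + 1) * 2 ^ (2 * s) with hC0
  have C0n : 0 ≤ C0 := by positivity
  refine ⟨C0 * (3 * (N2 p).toReal), by positivity, fun u v hu hv => ?_⟩
  set A : Plane → ℝ≥0∞ := fun ξ => ENNReal.ofReal (jb ξ ^ (s + 1) * ‖u ξ‖) with hA
  set B : Plane → ℝ≥0∞ := fun ξ => ENNReal.ofReal (jb ξ ^ s * ‖v ξ‖) with hB
  set D : Plane → ℝ≥0∞ := fun ξ => ENNReal.ofReal (jb ξ ^ (s + 2) * ‖u ξ‖) with hD
  have mA : Measurable A := ((continuous_jb_rpow _).mul hu.1.norm).measurable.ennreal_ofReal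
  have mB : Measurable B := ((continuous_jb_rpow _).mul hv.1.norm).measurable.ennreal_ofReal
  have mD : Measurable D := ((continuous_jb_rpow _).mul hu.1.norm).measurable.ennreal_ofReal
  have pt : ∀ ξ η, ‖((‖ξ‖ ^ 2 * jb η ^ (2 * s) - jb ξ ^ (2 * s + 2) : ℝ) : ℂ) * Phi3 u v u (ξ, η)‖ₑ
      ≤ ENNReal.ofReal C0 * (A (ξ - η) * B η * D ξ * p (ξ - η) + A (ξ - η) * B η * D ξ * p η +
        A (ξ - η) * B η * D ξ * p ξ) := by
    intro ξ η
    have j1 := jb_pos ξ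
    have j2 := jb_pos η
    have j3 := jb_pos (ξ - η)
    have : ENNReal.ofReal C0 * (A (ξ - η) * B η * D ξ * p (ξ - η) + A (ξ - η) * B η * D ξ * p η +
        A (ξ - η) * B η * D ξ * p ξ) = ENNReal.ofReal (C0 * ((jb (ξ - η) ^ (s + 1) * ‖u (ξ - η)‖) *
          (jb η ^ s * ‖v η‖) * (jb ξ ^ (s + 2) * ‖u ξ‖) *
          (jb (ξ - η) ^ (1 - s) + jb η ^ (1 - s) + jb ξ ^ (1 - s)))) := by
      rw [ofReal_tri C0n (by positivity) (by positivity) (by positivity) (by positivity)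
        (by positivity) (by positivity)]
    rw [this, ← ofReal_norm]
    apply ENNReal.ofReal_le_ofReal
    simp only [Phi3, norm_mul, Complex.norm_real, RCLike.norm_conj, Real.norm_eq_abs]
    have := mul_le_mul_of_nonneg_right (kernel_bound s hs ξ η)
      (by positivity : 0 ≤ ‖u (ξ - η)‖ * ‖v η‖ * ‖u ξ‖)
    rw [← hC0] at this
    refine (le_of_eq ?_).trans (this.trans (le_of_eq ?_)) <;> ring
  have tot : ‖∫ ξ, ∫ η, ((‖ξ‖ ^ 2 * jb η ^ (2 * s) - jb ξ ^ (2 * s + 2) : ℝ) : ℂ) * Phi3 u v u (ξ, η)‖ₑ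
      ≤ ENNReal.ofReal C0 * (3 * (N2 p * N2 A * N2 B * N2 D)) := by
    calc _ ≤ ∫⁻ ξ, ‖∫ η, ((‖ξ‖ ^ 2 * jb η ^ (2 * s) - jb ξ ^ (2 * s + 2) : ℝ) : ℂ) * Phi3 u v u (ξ, η)‖ₑ :=
          enorm_integral_le_lintegral_enorm _
      _ ≤ ∫⁻ ξ, ∫⁻ η, ENNReal.ofReal C0 * (A (ξ - η) * B η * D ξ * p (ξ - η) + A (ξ - η) * B η * D ξ * p η +
        A (ξ - η) * B η * D ξ * p ξ) := by
          apply lintegral_mono; intro ξ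
          refine (enorm_integral_le_lintegral_enorm _).trans ?_
          exact lintegral_mono (fun η => pt ξ η)
      _ = ENNReal.ofReal C0 * ((∫⁻ ξ, ∫⁻ η, A (ξ - η) * B η * D ξ * p (ξ - η)) +
          (∫⁻ ξ, ∫⁻ η, A (ξ - η) * B η * D ξ * p η) + ∫⁻ ξ, ∫⁻ η, A (ξ - η) * B η * D ξ * p ξ) := by
          have m1 : Measurable (fun q : Plane × Plane => A (q.1 - q.2) * B q.2 * D q.1 * p (q.1 - q.2)) := by fun_prop
          have m2 : Measurable (fun q : Plane × Plane => A (q.1 - q.2) * B q.2 * D q.1 * p q.2) := by fun_prop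
          rw [← lintegral_add_left (m1.lintegral_prod_right'), ← lintegral_add_left]
          · rw [← lintegral_const_mul' _ _ ENNReal.ofReal_ne_top]
            apply lintegral_congr; intro ξ
            rw [lintegral_const_mul' _ _ ENNReal.ofReal_ne_top, lintegral_add_left (by fun_prop),
              lintegral_add_left (by fun_prop)]
          · exact (m1.lintegral_prod_right').add (m2.lintegral_prod_right')
      _ ≤ ENNReal.ofReal C0 * (N2 p * N2 A * N2 B * N2 D + N2 p * N2 A * N2 B * N2 D
            + N2 p * N2 A * N2 B * N2 D) := by
          gcongr
          · exact tri1 mA mB mD hpm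
          · exact tri2 mA mB mD hpm
          · exact tri3 mA mB mD hpm
      _ = _ := by ring
  rw [hA, hB, hD, N2_eq hu, N2_eq hv, N2_eq hu] at tot
  rw [← ofReal_norm, ← ENNReal.ofReal_toReal (N2_jb s hs)] at tot
  have e3 : (3 : ℝ≥0∞) = ENNReal.ofReal 3 := by norm_num
  rw [e3, ← ENNReal.ofReal_mul (by positivity), ← ENNReal.ofReal_mul (by positivity),
    ← ENNReal.ofReal_mul (by positivity), ← ENNReal.ofReal_mul (by positivity),
    ← ENNReal.ofReal_mul (by positivity), ENNReal.ofReal_le_ofReal_iff (by positivity)] at tot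
  refine tot.trans (le_of_eq ?_)
  rw [show 2 * (s + 1) = 2 * s + 2 by ring, show 2 * (s + 2) = 2 * s + 4 by ring]
  ring
open scoped ENNReal ComplexConjugate

/-- `4π²`. -/
def kap : ℝ := 4 * π ^ 2

lemma one_le_kap : 1 ≤ kap := by
  unfold kap; nlinarith [Real.pi_gt_three]

/-- Right-hand side of the first equation on the Fourier side. -/
def rhsA (μ : ℝ) (u v : Plane → ℂ) (ξ : Plane) : ℂ :=
  -((kap * μ * ‖ξ‖ ^ 2 : ℝ) : ℂ) * u ξ - (kap : ℂ) * Q u v ξ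

/-- Right-hand side of the second equation on the Fourier side. -/
def rhsB (u : Plane → ℂ) (ξ : Plane) : ℂ :=
  -((kap ^ 2 : ℝ) : ℂ) * Q u (fun ξ => ((‖ξ‖ ^ 2 : ℝ) : ℂ) * u ξ) ξ

lemma integral_re' {f : Plane → ℂ} (hf : Integrable f) : ∫ x, (f x).re = (∫ x, f x).re :=
  integral_re hf

lemma rhsA_integral (s μ : ℝ) {u v : Plane → ℂ} (hu : RD u) (hv : RD v) :
    ∫ ξ, jb ξ ^ (2 * s + 2) * (2 * (conj (u ξ) * rhsA μ u v ξ).re) =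
      -2 * kap * μ * ((∫ ξ, jb ξ ^ (2 * s + 4) * ‖u ξ‖ ^ 2) - ∫ ξ, jb ξ ^ (2 * s + 2) * ‖u ξ‖ ^ 2)
      - 2 * kap * (∫ ξ, ∫ η, ((jb ξ ^ (2 * s + 2) : ℝ) : ℂ) * Phi3 u v u (ξ, η)).re := by
  have i1 := hu.integrable_sq (2 * s + 4)
  have i2 := hu.integrable_sq (2 * s + 2)
  have i3 := integrable_Q hu hv hu (2 * s + 2)
  have i4 : Integrable (fun ξ => -2 * kap * μ * (jb ξ ^ (2 * s + 4) * ‖u ξ‖ ^ 2 -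
      jb ξ ^ (2 * s + 2) * ‖u ξ‖ ^ 2)) := (i1.sub i2).const_mul _
  have i5 : Integrable (fun ξ => 2 * kap * (((jb ξ ^ (2 * s + 2) : ℝ) : ℂ) *
      (conj (u ξ) * Q u v ξ)).re) := i3.re.const_mul _
  rw [← integral_Q, ← integral_re' i3, ← integral_sub i1 i2, ← integral_const_mul,
    ← integral_const_mul, ← integral_sub i4 i5]
  congr 1; ext ξ
  have e : jb ξ ^ (2 * s + 4) = jb ξ ^ (2 * s + 2) * (1 + ‖ξ‖ ^ 2) := by
    rw [← jb_sq, ← Real.rpow_natCast, jb_rpow_add]; congr 1; push_cast; ring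
  have e2 : conj (u ξ) * rhsA μ u v ξ = ((-(kap * μ * ‖ξ‖ ^ 2 * ‖u ξ‖ ^ 2) : ℝ) : ℂ) -
      (kap : ℂ) * (conj (u ξ) * Q u v ξ) := by
    have := Complex.conj_mul' (u ξ)
    unfold rhsA
    push_cast
    rw [← this]; ring
  rw [e2, e, Complex.sub_re, Complex.ofReal_re, Complex.re_ofReal_mul, Complex.re_ofReal_mul]
  ring

lemma rhsB_integral (s : ℝ) {u v : Plane → ℂ} (hu : RD u) (hv : RD v)
    (hh : ∀ ξ, u (-ξ) = conj (u ξ)) :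
    ∫ ξ, jb ξ ^ (2 * s) * (2 * (conj (v ξ) * rhsB u ξ).re) =
      2 * kap ^ 2 * (∫ ξ, ∫ η, ((‖ξ‖ ^ 2 * jb η ^ (2 * s) : ℝ) : ℂ) * Phi3 u v u (ξ, η)).re := by
  have i3 := integrable_Q hu hu.normsq_mul hv (2 * s)
  have h := I2_eq hu hv hh (2 * s)
  have h2 := congrArg Complex.re h
  rw [Complex.neg_re, Complex.conj_re] at h2
  have h3 : (∫ ξ, ∫ η, ((‖ξ‖ ^ 2 * jb η ^ (2 * s) : ℝ) : ℂ) * Phi3 u v u (ξ, η)).re =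
    - (∫ ξ, ((jb ξ ^ (2 * s) : ℝ) : ℂ) * (conj (v ξ) * Q u (fun ξ => ((‖ξ‖ ^ 2 : ℝ) : ℂ) * u ξ) ξ)).re := by
    linarith
  rw [h3, ← integral_re' i3, ← integral_neg, ← integral_const_mul]
  congr 1; ext ξ
  have e2 : conj (v ξ) * rhsB u ξ = ((-kap ^ 2 : ℝ) : ℂ) *
      (conj (v ξ) * Q u (fun ξ => ((‖ξ‖ ^ 2 : ℝ) : ℂ) * u ξ) ξ) := by
    unfold rhsB; push_cast; ring
  rw [e2, Complex.re_ofReal_mul, Complex.re_ofReal_mul]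
  ring

lemma sub_integral (s : ℝ) {u v : Plane → ℂ} (hu : RD u) (hv : RD v) :
    (∫ ξ, ∫ η, ((‖ξ‖ ^ 2 * jb η ^ (2 * s) - jb ξ ^ (2 * s + 2) : ℝ) : ℂ) * Phi3 u v u (ξ, η)) =
    (∫ ξ, ∫ η, ((‖ξ‖ ^ 2 * jb η ^ (2 * s) : ℝ) : ℂ) * Phi3 u v u (ξ, η)) -
    (∫ ξ, ∫ η, ((jb ξ ^ (2 * s + 2) : ℝ) : ℂ) * Phi3 u v u (ξ, η)) := by
  have i1 := integrable_Phi3 hu hv hu (c := fun p => ‖p.1‖ ^ 2 * jb p.2 ^ (2 * s))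
    ((continuous_fst.norm.pow 2).mul ((continuous_jb_rpow _).comp continuous_snd)) (r1 := 2) (r2 := 2 * s)
    (fun p => by
      have hj := jb_pos p.1
      have hj2 := jb_pos p.2
      rw [abs_of_nonneg (by positivity)]
      gcongr
      have := norm_le_jb p.1
      norm_num
      gcongr)
  have i2 := integrable_Phi3 hu hv hu (c := fun p => jb p.1 ^ (2 * s + 2))
      ((continuous_jb_rpow _).comp continuous_fst) (r1 := 2 * s + 2) (r2 := 0) (fun p => by
      have hj := jb_pos p.1
      rw [abs_of_nonneg (by positivity)]; simp)
  have := integral_integral_sub' i1 i2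
  rw [← this]
  congr 1; ext ξ; congr 1; ext η
  simp only [Pi.sub_apply]
  push_cast; ring

lemma static_energy (s μ : ℝ) (hs : 2 < s) (hμ : 0 < μ) : ∃ L : ℝ, 0 < L ∧ ∀ u v : Plane → ℂ,
    RD u → RD v → (∀ ξ, u (-ξ) = conj (u ξ)) →
    ∀ E, E = kap * (∫ ξ, jb ξ ^ (2 * s + 2) * ‖u ξ‖ ^ 2) + (∫ ξ, jb ξ ^ (2 * s) * ‖v ξ‖ ^ 2) →
    kap * (∫ ξ, jb ξ ^ (2 * s + 2) * (2 * (conj (u ξ) * rhsA μ u v ξ).re)) +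
      ∫ ξ, jb ξ ^ (2 * s) * (2 * (conj (v ξ) * rhsB u ξ).re) ≤ L * (E + E ^ 2) := by
  obtain ⟨C, hC, hT⟩ := trilinear_bound s hs
  refine ⟨2 * kap ^ 2 * (μ + C ^ 2 / (4 * μ)), ?_, fun u v hu hv hh E hE => ?_⟩
  · have := one_le_kap
    positivity
  have hT := hT u v hu hv
  rw [rhsA_integral s μ hu hv, rhsB_integral s hu hv hh]
  rw [sub_integral s hu hv] at hT
  have hre := (Complex.abs_re_le_norm _).trans hT
  rw [Complex.sub_re] at hre
  have hre := (le_abs_self _).trans hre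
  set X := (∫ ξ, ∫ η, ((‖ξ‖ ^ 2 * jb η ^ (2 * s) : ℝ) : ℂ) * Phi3 u v u (ξ, η)).re
  set Y := (∫ ξ, ∫ η, ((jb ξ ^ (2 * s + 2) : ℝ) : ℂ) * Phi3 u v u (ξ, η)).re
  have nn : ∀ (r : ℝ) (f : Plane → ℂ), 0 ≤ ∫ ξ, jb ξ ^ r * ‖f ξ‖ ^ 2 := fun r f =>
    integral_nonneg fun ξ => by
      have hj := jb_pos ξ
      positivity
  have ha := nn (2 * s + 2) u
  have hb := nn (2 * s) v
  have hd := nn (2 * s + 4) u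
  set a := ∫ ξ, jb ξ ^ (2 * s + 2) * ‖u ξ‖ ^ 2
  set b := ∫ ξ, jb ξ ^ (2 * s) * ‖v ξ‖ ^ 2
  set d := ∫ ξ, jb ξ ^ (2 * s + 4) * ‖u ξ‖ ^ 2
  have hk := one_le_kap
  have h1 : C * (√a * √b * √d) ≤ μ * d + C ^ 2 / (4 * μ) * (a * b) := by
    have hd2 := Real.sq_sqrt hd
    have ha2 := Real.sq_sqrt ha
    have hb2 := Real.sq_sqrt hb
    have : 0 ≤ μ * (√d - C / (2 * μ) * (√a * √b)) ^ 2 := by positivity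
    have e : μ * (√d - C / (2 * μ) * (√a * √b)) ^ 2 = μ * √d ^ 2 + C ^ 2 / (4 * μ) * (√a ^ 2 * √b ^ 2)
        - C * (√a * √b * √d) := by
      field_simp; ring
    rw [e, hd2, ha2, hb2] at this
    linarith
  have hka : a ≤ kap * a := le_mul_of_one_le_left ha hk
  have hEa : a ≤ E := by rw [hE]; linarith
  have hEb : b ≤ E := by rw [hE]; linarith
  have hab : a * b ≤ E ^ 2 := by rw [sq]; exact mul_le_mul hEa hEb hb (ha.trans hEa)
  have hE0 : 0 ≤ E := ha.trans hEa
  have h2 : X - Y - μ * (d - a) ≤ (μ + C ^ 2 / (4 * μ)) * (E + E ^ 2) := by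
    have c0 : 0 ≤ C ^ 2 / (4 * μ) := by positivity
    have t1 : C ^ 2 / (4 * μ) * (a * b) ≤ C ^ 2 / (4 * μ) * E ^ 2 := by gcongr
    have t2 : μ * a ≤ μ * E := by gcongr
    have t3 : 0 ≤ C ^ 2 / (4 * μ) * E := by positivity
    have t4 : 0 ≤ μ * E ^ 2 := by positivity
    nlinarith
  have h3 := mul_le_mul_of_nonneg_left h2 (by positivity : 0 ≤ 2 * kap ^ 2)
  refine (le_of_eq ?_).trans (h3.trans (le_of_eq ?_)) <;> ring

open scoped ENNReal ComplexConjugate Topology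

lemma peetre (ξ η : Plane) : jb ξ ≤ 2 * (jb (ξ - η) * jb η) := by
  have h1 := (jb_sub_le ξ η).trans (norm_le_jb _)
  have h2 := one_le_jb (ξ - η)
  have h3 := one_le_jb η
  nlinarith

lemma Q_bound (n : ℕ) {f g : Plane → ℂ} {K K' : ℝ}
    (hf : ∀ ξ, jb ξ ^ (n + 5) * ‖f ξ‖ ≤ K) (hg : ∀ ξ, jb ξ ^ (n + 5) * ‖g ξ‖ ≤ K') (ξ : Plane) :
    jb ξ ^ n * ‖Q f g ξ‖ ≤ 2 ^ n * K * K' * ∫ η : Plane, jb η ^ (-(4:ℝ)) := by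
  have j0 := jb_pos ξ
  have e : jb ξ ^ n * ‖Q f g ξ‖ = ‖∫ η, ((jb ξ ^ n : ℝ) : ℂ) * ((wd ξ η : ℂ) * f (ξ - η) * g η)‖ := by
    rw [integral_const_mul, norm_mul, Complex.norm_real, Real.norm_of_nonneg (by positivity)]; rfl
  rw [e, ← integral_const_mul]
  apply norm_integral_le_of_norm_le ((integrable_jb (by norm_num)).const_mul _)
  refine Filter.Eventually.of_forall fun η => ?_
  have j1 := jb_pos (ξ - η)
  have j2 := jb_pos η
  rw [norm_mul, norm_mul, norm_mul, Complex.norm_real, Complex.norm_real,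
    Real.norm_of_nonneg (by positivity), Real.norm_eq_abs]
  have hK0 : 0 ≤ K := le_trans (by positivity) (hf (ξ - η))
  have h1 : jb (ξ - η) ^ (n + 1) * ‖f (ξ - η)‖ ≤ K := by
    refine le_trans ?_ (hf (ξ - η))
    gcongr
    · exact one_le_jb _
    · norm_num
  have h2 : jb η ^ (n + 1) * ‖g η‖ ≤ K' * jb η ^ (-(4:ℝ)) := by
    rw [Real.rpow_neg j2.le, ← div_eq_mul_inv, le_div_iff₀ (by positivity)]
    refine le_trans (le_of_eq ?_) (hg η)
    rw [show (4:ℝ) = (4:ℕ) by norm_num, Real.rpow_natCast]; ring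
  calc jb ξ ^ n * (|wd ξ η| * ‖f (ξ - η)‖ * ‖g η‖)
      ≤ (2 * (jb (ξ - η) * jb η)) ^ n * ((jb (ξ - η) * jb η) * ‖f (ξ - η)‖ * ‖g η‖) := by
        gcongr
        · exact peetre ξ η
        · exact wd_le_right _ _
    _ = 2 ^ n * ((jb (ξ - η) ^ (n + 1) * ‖f (ξ - η)‖) * (jb η ^ (n + 1) * ‖g η‖)) := by ring
    _ ≤ 2 ^ n * (K * (K' * jb η ^ (-(4:ℝ)))) := by gcongr
    _ = _ := by ring

lemma Q_meas {f g : Plane → ℂ} (hf : Continuous f) (hg : Continuous g) :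
    StronglyMeasurable (Q f g) := by
  have h1 : Continuous (fun p : Plane × Plane => ((wd p.1 p.2 : ℝ) : ℂ)) :=
    Complex.continuous_ofReal.comp continuous_wd
  have : Continuous (fun p : Plane × Plane => ((wd p.1 p.2 : ℝ) : ℂ) * f (p.1 - p.2) * g p.2) := by
    fun_prop
  exact this.stronglyMeasurable.integral_prod_right

lemma decay_mono {f : Plane → ℂ} {n m : ℕ} (h : m ≤ n) {K : ℝ} {ξ : Plane}
    (hf : jb ξ ^ n * ‖f ξ‖ ≤ K) : jb ξ ^ m * ‖f ξ‖ ≤ K := by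
  refine le_trans ?_ hf
  gcongr
  exact one_le_jb _

lemma energy_deriv (r : ℝ) (n : ℕ) (hn : r + 3 ≤ n) {S : Set ℝ} {t₀ : ℝ} (hS : S ∈ 𝓝 t₀)
    {u u' : ℝ → Plane → ℂ} (hc : ∀ t ∈ S, Continuous (u t))
    (hm : AEStronglyMeasurable (u' t₀)) {K K' : ℝ}
    (hd : ∀ t ∈ S, ∀ ξ, HasDerivAt (fun τ => u τ ξ) (u' t ξ) t)
    (hK : ∀ t ∈ S, ∀ ξ, jb ξ ^ n * ‖u t ξ‖ ≤ K) (hK' : ∀ t ∈ S, ∀ ξ, ‖u' t ξ‖ ≤ K')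
    (hi : Integrable (fun ξ => jb ξ ^ r * ‖u t₀ ξ‖ ^ 2)) :
    HasDerivAt (fun t => ∫ ξ, jb ξ ^ r * ‖u t ξ‖ ^ 2)
      (∫ ξ, jb ξ ^ r * (2 * (conj (u t₀ ξ) * u' t₀ ξ).re)) t₀ := by
  refine (hasDerivAt_integral_of_dominated_loc_of_deriv_le (F := fun t ξ => jb ξ ^ r * ‖u t ξ‖ ^ 2)
    (F' := fun t ξ => jb ξ ^ r * (2 * (conj (u t ξ) * u' t ξ).re))
    (bound := fun ξ => (2 * K * K') * jb ξ ^ (-(3:ℝ))) hS ?_ hi ?_ ?_ ?_ ?_).2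
  · filter_upwards [hS] with t ht
    exact ((continuous_jb_rpow r).mul ((hc t ht).norm.pow 2)).aestronglyMeasurable
  · have h1 : AEStronglyMeasurable (fun ξ => conj (u t₀ ξ)) :=
      (Complex.continuous_conj.comp (hc t₀ (mem_of_mem_nhds hS))).aestronglyMeasurable
    have h2 := (h1.mul hm)
    have h3 : AEStronglyMeasurable (fun ξ => (conj (u t₀ ξ) * u' t₀ ξ).re) :=
      Complex.continuous_re.comp_aestronglyMeasurable h2
    exact (continuous_jb_rpow r).aestronglyMeasurable.mul (h3.const_mul 2)
  · refine Filter.Eventually.of_forall fun ξ t ht => ?_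
    have hj := jb_pos ξ
    have hb := decay_rpow hn (hK t ht ξ)
    have hK0 : 0 ≤ K := le_trans (by positivity) (hK t ht ξ)
    rw [norm_mul, Real.norm_of_nonneg (by positivity), norm_mul, Real.norm_eq_abs, Real.norm_eq_abs]
    calc jb ξ ^ r * (|2| * |(conj (u t ξ) * u' t ξ).re|)
        ≤ jb ξ ^ r * (2 * ((K * jb ξ ^ (-(r + 3))) * K')) := by
          rw [abs_of_pos (two_pos)]
          gcongr
          refine (Complex.abs_re_le_norm _).trans ?_
          rw [norm_mul, RCLike.norm_conj]
          gcongr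
          exact hK' t ht ξ
      _ = 2 * K * K' * (jb ξ ^ r * jb ξ ^ (-(r + 3))) := by ring
      _ = _ := by rw [jb_rpow_add]; congr 2; ring
  · exact (integrable_jb (by norm_num)).const_mul _
  · refine Filter.Eventually.of_forall fun ξ t ht => ?_
    have := (hd t ht ξ).norm_sq
    rw [Complex.inner, mul_comm (u' t ξ)] at this
    exact this.const_mul _

lemma energy_cont (r : ℝ) (n : ℕ) (hn : (r + 3) / 2 ≤ n) {S : Set ℝ} {t₀ δ : ℝ} (hδ : 0 < δ)
    {u : ℝ → Plane → ℂ} (hc : ∀ t ∈ S, Continuous (u t)) {K : ℝ}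
    (hd : ∀ ξ, ContinuousWithinAt (fun τ => u τ ξ) S t₀)
    (hK : ∀ t ∈ S, |t - t₀| < δ → ∀ ξ, jb ξ ^ n * ‖u t ξ‖ ≤ K) :
    ContinuousWithinAt (fun t => ∫ ξ, jb ξ ^ r * ‖u t ξ‖ ^ 2) S t₀ := by
  have hnear : ∀ᶠ t in 𝓝[S] t₀, t ∈ S ∧ |t - t₀| < δ := by
    refine Filter.Eventually.and self_mem_nhdsWithin ?_
    apply mem_nhdsWithin_of_mem_nhds
    exact Metric.ball_mem_nhds t₀ hδ
  refine continuousWithinAt_of_dominated (bound := fun ξ => K ^ 2 * jb ξ ^ (-(3:ℝ))) ?_ ?_ ?_ ?_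
  · filter_upwards [hnear] with t ht
    exact ((continuous_jb_rpow r).mul ((hc t ht.1).norm.pow 2)).aestronglyMeasurable
  · filter_upwards [hnear] with t ht
    refine Filter.Eventually.of_forall fun ξ => ?_
    have hj := jb_pos ξ
    have hb := decay_rpow hn (hK t ht.1 ht.2 ξ)
    rw [Real.norm_of_nonneg (by positivity)]
    calc jb ξ ^ r * ‖u t ξ‖ ^ 2 ≤ jb ξ ^ r * (K * jb ξ ^ (-((r + 3) / 2))) ^ 2 := by
          gcongr
      _ = K ^ 2 * (jb ξ ^ r * (jb ξ ^ (-((r + 3) / 2)) * jb ξ ^ (-((r + 3) / 2)))) := by ring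
      _ = _ := by
        rw [jb_rpow_add, jb_rpow_add]; congr 2; ring
  · exact (integrable_jb (by norm_num)).const_mul _
  · refine Filter.Eventually.of_forall fun ξ => ?_
    exact continuousWithinAt_const.mul ((hd ξ).norm.pow 2)

/-- Fourier-side solution. -/
structure FSol (μ T' : ℝ) (u v : ℝ → Plane → ℂ) : Prop where
  cu : ∀ t ∈ Set.Ico 0 T', Continuous (u t)
  cv : ∀ t ∈ Set.Ico 0 T', Continuous (v t)
  herm : ∀ t ∈ Set.Ico 0 T', ∀ ξ, u t (-ξ) = conj (u t ξ)
  dec : ∀ t ∈ Set.Ico 0 T', ∀ n : ℕ, ∃ δ > 0, ∃ K : ℝ, ∀ τ ∈ Set.Ico 0 T', |τ - t| < δ →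
    ∀ ξ, jb ξ ^ n * ‖u τ ξ‖ ≤ K ∧ jb ξ ^ n * ‖v τ ξ‖ ≤ K
  du : ∀ t ∈ Set.Ioo 0 T', ∀ ξ, HasDerivAt (fun τ => u τ ξ) (rhsA μ (u t) (v t) ξ) t
  dv : ∀ t ∈ Set.Ioo 0 T', ∀ ξ, HasDerivAt (fun τ => v τ ξ) (rhsB (u t) ξ) t
  ctu : ∀ ξ, ContinuousOn (fun τ => u τ ξ) (Set.Ico 0 T')
  ctv : ∀ ξ, ContinuousOn (fun τ => v τ ξ) (Set.Ico 0 T')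

lemma FSol.rdu {μ T' : ℝ} {u v : ℝ → Plane → ℂ} (h : FSol μ T' u v) {t : ℝ}
    (ht : t ∈ Set.Ico 0 T') : RD (u t) := by
  refine ⟨h.cu t ht, fun n => ?_⟩
  obtain ⟨δ, hδ, K, hK⟩ := h.dec t ht n
  exact ⟨K, fun ξ => (hK t ht (by simpa using hδ) ξ).1⟩

lemma FSol.rdv {μ T' : ℝ} {u v : ℝ → Plane → ℂ} (h : FSol μ T' u v) {t : ℝ}
    (ht : t ∈ Set.Ico 0 T') : RD (v t) := by
  refine ⟨h.cv t ht, fun n => ?_⟩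
  obtain ⟨δ, hδ, K, hK⟩ := h.dec t ht n
  exact ⟨K, fun ξ => (hK t ht (by simpa using hδ) ξ).2⟩

/-- energy -/
def En (s : ℝ) (u v : ℝ → Plane → ℂ) (t : ℝ) : ℝ :=
  kap * (∫ ξ, jb ξ ^ (2 * s + 2) * ‖u t ξ‖ ^ 2) + (∫ ξ, jb ξ ^ (2 * s) * ‖v t ξ‖ ^ 2)

lemma En_nonneg (s : ℝ) (u v : ℝ → Plane → ℂ) (t : ℝ) : 0 ≤ En s u v t := by
  have nn : ∀ (r : ℝ) (f : Plane → ℂ), 0 ≤ ∫ ξ, jb ξ ^ r * ‖f ξ‖ ^ 2 := fun r f =>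
    integral_nonneg fun ξ => by
      have hj := jb_pos ξ
      positivity
  have := one_le_kap
  exact add_nonneg (mul_nonneg (by linarith) (nn _ _)) (nn _ _)

lemma FSol.cont {μ T' : ℝ} {u v : ℝ → Plane → ℂ} (h : FSol μ T' u v) (s : ℝ) :
    ContinuousOn (En s u v) (Set.Ico 0 T') := by
  intro t ht
  obtain ⟨n, hn⟩ := exists_nat_ge (max ((2 * s + 2 + 3) / 2) ((2 * s + 3) / 2))
  obtain ⟨δ, hδ, K, hK⟩ := h.dec t ht n
  refine ContinuousWithinAt.add (continuousWithinAt_const.mul ?_) ?_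
  · exact energy_cont _ n ((le_max_left _ _).trans hn) hδ h.cu (fun ξ => h.ctu ξ t ht)
      (fun τ hτ hd ξ => (hK τ hτ hd ξ).1)
  · exact energy_cont _ n ((le_max_right _ _).trans hn) hδ h.cv (fun ξ => h.ctv ξ t ht)
      (fun τ hτ hd ξ => (hK τ hτ hd ξ).2)

lemma FSol.hasDeriv {μ T' : ℝ} {u v : ℝ → Plane → ℂ} (h : FSol μ T' u v) (s : ℝ) {t : ℝ}
    (ht : t ∈ Set.Ioo 0 T') :
    HasDerivAt (En s u v)
      (kap * (∫ ξ, jb ξ ^ (2 * s + 2) * (2 * (conj (u t ξ) * rhsA μ (u t) (v t) ξ).re)) +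
      ∫ ξ, jb ξ ^ (2 * s) * (2 * (conj (v t ξ) * rhsB (u t) ξ).re)) t := by
  have ht' : t ∈ Set.Ico 0 T' := ⟨ht.1.le, ht.2⟩
  obtain ⟨n, hn⟩ := exists_nat_ge (max (max (2 * s + 2 + 3) (2 * s + 3)) 7)
  have hn1 : 2 * s + 2 + 3 ≤ (n:ℝ) := (le_max_left _ _).trans ((le_max_left _ _).trans hn)
  have hn2 : 2 * s + 3 ≤ (n:ℝ) := (le_max_right _ _).trans ((le_max_left _ _).trans hn)
  have hn3 : 7 ≤ n := by exact_mod_cast (le_max_right _ _).trans hn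
  obtain ⟨δ, hδ, K, hK⟩ := h.dec t ht' n
  set S := Set.Ioo 0 T' ∩ Metric.ball t δ with hSdef
  have hS : S ∈ 𝓝 t := Filter.inter_mem (Ioo_mem_nhds ht.1 ht.2) (Metric.ball_mem_nhds t hδ)
  have hSI : ∀ τ ∈ S, τ ∈ Set.Ico 0 T' := fun τ hτ => ⟨hτ.1.1.le, hτ.1.2⟩
  have hKu : ∀ τ ∈ S, ∀ ξ, jb ξ ^ n * ‖u τ ξ‖ ≤ K := fun τ hτ ξ => (hK τ (hSI τ hτ) hτ.2 ξ).1
  have hKv : ∀ τ ∈ S, ∀ ξ, jb ξ ^ n * ‖v τ ξ‖ ≤ K := fun τ hτ ξ => (hK τ (hSI τ hτ) hτ.2 ξ).2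
  have hk := one_le_kap
  refine HasDerivAt.add (HasDerivAt.const_mul _ ?_) ?_
  · refine energy_deriv (2 * s + 2) n hn1 hS (u := u) (u' := fun τ => rhsA μ (u τ) (v τ))
      (K := K) (K' := kap * |μ| * K + kap * (2 ^ 0 * K * K * ∫ η : Plane, jb η ^ (-(4:ℝ))))
      (fun τ hτ => h.cu τ (hSI τ hτ)) ?_ (fun τ hτ ξ => h.du τ hτ.1 ξ) hKu ?_
      ((h.rdu ht').integrable_sq _)
    · have h1 : Continuous (fun ξ : Plane => -((kap * μ * ‖ξ‖ ^ 2 : ℝ) : ℂ) * u t ξ) :=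
        ((Complex.continuous_ofReal.comp (by fun_prop)).neg).mul (h.cu t ht')
      exact h1.aestronglyMeasurable.sub ((Q_meas (h.cu t ht') (h.cv t ht')).aestronglyMeasurable.const_mul _)
    · intro τ hτ ξ
      unfold rhsA
      refine (norm_sub_le _ _).trans ?_
      have hj := jb_pos ξ
      have q := Q_bound 0 (fun ξ => decay_mono (by omega) (hKu τ hτ ξ))
        (fun ξ => decay_mono (by omega) (hKv τ hτ ξ)) ξ
      rw [pow_zero, one_mul] at q
      have b2 : jb ξ ^ 2 * ‖u τ ξ‖ ≤ K := decay_mono (by omega) (hKu τ hτ ξ)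
      rw [norm_mul, norm_mul, norm_neg, Complex.norm_real, Complex.norm_real, Real.norm_eq_abs,
        Real.norm_eq_abs, abs_mul, abs_mul, abs_of_pos (by linarith : 0 < kap),
        abs_of_nonneg (by positivity : 0 ≤ ‖ξ‖ ^ 2), mul_assoc (kap * |μ|)]
      gcongr
      refine le_trans ?_ b2
      gcongr
      exact norm_le_jb ξ
  · refine energy_deriv (2 * s) n hn2 hS (u := v) (u' := fun τ => rhsB (u τ))
      (K := K) (K' := kap ^ 2 * (2 ^ 0 * K * K * ∫ η : Plane, jb η ^ (-(4:ℝ))))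
      (fun τ hτ => h.cv τ (hSI τ hτ)) ?_ (fun τ hτ ξ => h.dv τ hτ.1 ξ) hKv ?_
      ((h.rdv ht').integrable_sq _)
    · exact (Q_meas (h.cu t ht') (h.rdu ht').normsq_mul.1).aestronglyMeasurable.const_mul _
    · intro τ hτ ξ
      unfold rhsB
      have q := Q_bound 0 (g := fun ξ => ((‖ξ‖ ^ 2 : ℝ) : ℂ) * u τ ξ) (K' := K)
        (fun ξ => decay_mono (by omega) (hKu τ hτ ξ))
        (fun ξ => by
          have b2 : jb ξ ^ 7 * ‖u τ ξ‖ ≤ K := decay_mono (by omega) (hKu τ hτ ξ)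
          refine le_trans ?_ b2
          have hj := jb_pos ξ
          rw [norm_mul, Complex.norm_real, Real.norm_of_nonneg (by positivity), ← mul_assoc,
            show jb ξ ^ 7 = jb ξ ^ (0 + 5) * jb ξ ^ 2 by ring]
          gcongr
          exact norm_le_jb ξ) ξ
      rw [pow_zero, one_mul] at q
      rw [norm_mul, norm_neg, Complex.norm_real, Real.norm_of_nonneg (by positivity)]
      gcongr

lemma ode_bound {L M T' : ℝ} (hL : 0 < L) (hM : 0 < M) {E E' : ℝ → ℝ}
    (h0 : ∀ t, 0 ≤ E t) (hc : ContinuousOn E (Set.Ico 0 T'))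
    (hd : ∀ t ∈ Set.Ioo 0 T', HasDerivAt E (E' t) t)
    (hE : ∀ t ∈ Set.Ioo 0 T', E' t ≤ L * (E t + E t ^ 2)) (hM0 : E 0 ≤ M) {t : ℝ} (ht0 : 0 ≤ t)
    (htT : t < T') (htT2 : t ≤ Real.log (1 + 1 / (2 * (1 + M))) / L) : E t ≤ 4 * E 0 := by
  set G : ℝ → ℝ := fun t => E t / (1 + E t) * Real.exp (-L * t) with hG
  have hp : ∀ t, 0 < 1 + E t := fun t => by linarith [h0 t]
  have hGd : ∀ t ∈ Set.Ioo 0 T', HasDerivAt G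
      ((E' t * (1 + E t) - E t * E' t) / (1 + E t) ^ 2 * Real.exp (-L * t) +
        E t / (1 + E t) * (Real.exp (-L * t) * -L)) t := by
    intro t ht
    have h1 := (hd t ht).div ((hd t ht).const_add 1) (hp t).ne'
    have h2 : HasDerivAt (fun t => Real.exp (-L * t)) (Real.exp (-L * t) * -L) t := by
      have : HasDerivAt (fun t => -L * t) (-L) t := by
        simpa using (hasDerivAt_id t).const_mul (-L)
      exact this.exp
    exact h1.mul h2
  have hanti : AntitoneOn G (Set.Ico 0 T') := by
    apply antitoneOn_of_deriv_nonpos (convex_Ico 0 T')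
    · apply ContinuousOn.mul
      · exact hc.div (continuousOn_const.add hc) (fun t _ => (hp t).ne')
      · fun_prop
    · rw [interior_Ico]
      exact fun t ht => (hGd t ht).differentiableAt.differentiableWithinAt
    · rw [interior_Ico]
      intro t ht
      rw [(hGd t ht).deriv]
      have e : (E' t * (1 + E t) - E t * E' t) / (1 + E t) ^ 2 * Real.exp (-L * t) +
        E t / (1 + E t) * (Real.exp (-L * t) * -L) =
        (E' t - L * (E t + E t ^ 2)) * (Real.exp (-L * t) / (1 + E t) ^ 2) := by
        have := (hp t).ne'
        field_simp; ring
      rw [e]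
      apply mul_nonpos_of_nonpos_of_nonneg
      · linarith [hE t ht]
      · have := hp t
        positivity
  have hle : G t ≤ G 0 := hanti ⟨le_rfl, by linarith⟩ ⟨ht0, htT⟩ ht0
  have hq : Real.exp (L * t) ≤ 1 + 1 / (2 * (1 + M)) := by
    rw [← Real.le_log_iff_exp_le (by positivity)]
    rw [le_div_iff₀ hL] at htT2
    linarith
  set q := Real.exp (L * t) with hqdef
  have hq1 : q ≤ 1 + 1 / (2 * (1 + M)) := hq
  have hq0 : 0 < q := Real.exp_pos _
  have hqq : Real.exp (-L * t) = q⁻¹ := by rw [hqdef, ← Real.exp_neg]; congr 1; ring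
  simp only [hG, hqq, mul_zero, Real.exp_zero, mul_one] at hle
  have a1 := hp t
  have a0 := hp 0
  rw [← div_eq_mul_inv, div_le_iff₀ hq0, div_mul_eq_mul_div, div_le_div_iff₀ a1 a0] at hle
  have hqM : (q - 1) * E 0 ≤ 1 / 2 := by
    have : (q - 1) * E 0 ≤ 1 / (2 * (1 + M)) * M := by
      refine mul_le_mul (by linarith) hM0 (h0 0) (by positivity)
    refine this.trans ?_
    rw [div_mul_eq_mul_div, div_le_div_iff₀ (by positivity) (by norm_num)]
    linarith
  have hq2 : q ≤ 2 := by
    refine hq1.trans ?_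
    have : 1 / (2 * (1 + M)) ≤ 1 := by
      rw [div_le_one (by positivity)]; linarith
    linarith
  nlinarith [h0 t, h0 0]

lemma fourier_bound (s μ M : ℝ) (hs : 2 < s) (hμ : 0 < μ) (hM : 0 < M) : ∃ T : ℝ, 0 < T ∧
    ∀ T' : ℝ, ∀ u v, FSol μ T' u v → En s u v 0 ≤ M → ∀ t, 0 ≤ t → t < min T T' →
      En s u v t ≤ 4 * En s u v 0 := by
  obtain ⟨L, hL, h⟩ := static_energy s μ hs hμ
  refine ⟨Real.log (1 + 1 / (2 * (1 + M))) / L, ?_, fun T' u v hf h0 t ht htT => ?_⟩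
  · apply div_pos _ hL
    apply Real.log_pos
    have : 0 < 1 / (2 * (1 + M)) := by positivity
    linarith
  · refine ode_bound hL hM (En_nonneg s u v) (hf.cont s) (fun t ht => hf.hasDeriv s ht)
      (fun t ht => ?_) h0 ht (htT.trans_le (min_le_right _ _)) (htT.le.trans (min_le_left _ _))
    have ht' : t ∈ Set.Ico 0 T' := ⟨ht.1.le, ht.2⟩
    exact h (u t) (v t) (hf.rdu ht') (hf.rdv ht') (hf.herm t ht') _ rfl
open scoped ENNReal ComplexConjugate Topology SchwartzMap LineDeriv

/-- Schwartz seminorms locally bounded in time. -/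
def LB {F : Type*} [NormedAddCommGroup F] [NormedSpace ℝ F] (T' : ℝ) (f : ℝ → 𝓢(Plane, F)) : Prop :=
  ∀ t ∈ Set.Ico 0 T', ∀ k n : ℕ, ∃ K : ℝ, ∀ᶠ τ in 𝓝[Set.Ico 0 T'] t,
    SchwartzMap.seminorm ℝ k n (f τ) ≤ K

/-- Pointwise rapid decay, locally uniformly in time. -/
def PB {F : Type*} [NormedAddCommGroup F] (T' : ℝ) (f : ℝ → Plane → F) : Prop :=
  ∀ t ∈ Set.Ico 0 T', ∀ n : ℕ, ∃ K : ℝ, ∀ᶠ τ in 𝓝[Set.Ico 0 T'] t,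
    ∀ x, jb x ^ n * ‖f τ x‖ ≤ K

section LBsec
variable {F G : Type*} [NormedAddCommGroup F] [NormedSpace ℝ F] [NormedAddCommGroup G]
  [NormedSpace ℝ G] {T' : ℝ}

lemma LB.sup {f : ℝ → 𝓢(Plane, F)} (h : LB T' f) {t : ℝ} (ht : t ∈ Set.Ico 0 T')
    (S : Finset (ℕ × ℕ)) : ∃ K : ℝ, ∀ᶠ τ in 𝓝[Set.Ico 0 T'] t,
    (S.sup (schwartzSeminormFamily ℝ Plane F)) (f τ) ≤ K := by
  classical
  induction S using Finset.induction_on with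
  | empty => exact ⟨0, Filter.Eventually.of_forall fun τ => by simp⟩
  | insert a S ha ih =>
    obtain ⟨K, hK⟩ := ih
    obtain ⟨K', hK'⟩ := h t ht a.1 a.2
    refine ⟨max K' K, ?_⟩
    filter_upwards [hK, hK'] with τ h1 h2
    rw [Finset.sup_insert, Seminorm.sup_apply]
    exact max_le_max h2 h1

lemma LB.clm {f : ℝ → 𝓢(Plane, F)} (h : LB T' f) (L : 𝓢(Plane, F) →L[ℝ] 𝓢(Plane, G)) :
    LB T' (fun t => L (f t)) := by
  intro t ht k n
  have hq : Continuous ((SchwartzMap.seminorm ℝ k n : Seminorm ℝ 𝓢(Plane, G)).comp L.toLinearMap) :=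
    ((schwartz_withSeminorms ℝ Plane G).continuous_seminorm (k, n)).comp L.continuous
  obtain ⟨S, C, -, hC⟩ := Seminorm.bound_of_continuous (schwartz_withSeminorms ℝ Plane F) _ hq
  obtain ⟨K, hK⟩ := h.sup ht S
  refine ⟨C * K, ?_⟩
  filter_upwards [hK] with τ hτ
  refine (hC (f τ)).trans ?_
  change (C : ℝ) * _ ≤ _
  gcongr

lemma LB.pt {f : ℝ → 𝓢(Plane, F)} (h : LB T' f) : PB T' (fun t x => f t x) := by
  intro t ht n
  obtain ⟨K, hK⟩ := h.sup ht (Finset.Iic (n, 0))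
  refine ⟨2 ^ n * K, ?_⟩
  filter_upwards [hK] with τ hτ x
  have h1 := SchwartzMap.one_add_le_sup_seminorm_apply (𝕜 := ℝ) (m := (n, 0)) (k := n) (n := 0)
    le_rfl le_rfl (f τ) x
  rw [norm_iteratedFDeriv_zero] at h1
  have h2 := jb_le x
  have h3 := jb_pos x
  calc jb x ^ n * ‖f τ x‖ ≤ (1 + ‖x‖) ^ n * ‖f τ x‖ := by gcongr
    _ ≤ _ := h1
    _ ≤ 2 ^ n * K := by
      have : (Finset.Iic (n, 0)).sup (fun m => SchwartzMap.seminorm ℝ m.1 m.2) (f τ) ≤ K := hτ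
      gcongr

end LBsec

lemma PB.add {T' : ℝ} {f g : ℝ → Plane → ℂ} (hf : PB T' f) (hg : PB T' g) :
    PB T' (fun t x => f t x + g t x) := by
  intro t ht n
  obtain ⟨K, hK⟩ := hf t ht n
  obtain ⟨K', hK'⟩ := hg t ht n
  refine ⟨K + K', ?_⟩
  filter_upwards [hK, hK'] with τ h1 h2 x
  have := jb_pos x
  calc _ ≤ jb x ^ n * (‖f τ x‖ + ‖g τ x‖) := by gcongr; exact norm_add_le _ _
    _ ≤ _ := by rw [mul_add]; exact add_le_add (h1 x) (h2 x)

lemma PB.mul {T' : ℝ} {f g : ℝ → Plane → ℂ} (hf : PB T' f) (hg : PB T' g) :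
    PB T' (fun t x => f t x * g t x) := by
  intro t ht n
  obtain ⟨K, hK⟩ := hf t ht n
  obtain ⟨K', hK'⟩ := hg t ht 0
  refine ⟨K * K', ?_⟩
  filter_upwards [hK, hK'] with τ h1 h2 x
  have := jb_pos x
  have h2 := h2 x
  rw [pow_zero, one_mul] at h2
  rw [norm_mul, ← mul_assoc]
  exact mul_le_mul (h1 x) h2 (norm_nonneg _) ((by positivity : (0:ℝ) ≤ _).trans (h1 x))

lemma PB.const_mul {T' : ℝ} {f : ℝ → Plane → ℂ} (hf : PB T' f) (c : ℂ) :
    PB T' (fun t x => c * f t x) := by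
  intro t ht n
  obtain ⟨K, hK⟩ := hf t ht n
  refine ⟨‖c‖ * K, ?_⟩
  filter_upwards [hK] with τ h1 x
  rw [norm_mul, mul_left_comm]
  exact mul_le_mul_of_nonneg_left (h1 x) (norm_nonneg _)

lemma PB.congr {T' : ℝ} {f g : ℝ → Plane → ℂ} (hf : PB T' f) (h : ∀ t x, f t x = g t x) :
    PB T' g := by
  have : f = g := by ext t x; exact h t x
  exact this ▸ hf

lemma PB.int {T' : ℝ} {f : ℝ → Plane → ℂ} (hf : PB T' f) {t : ℝ} (ht : t ∈ Set.Ico 0 T') :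
    ∃ B : Plane → ℝ, Integrable B ∧ ∀ᶠ τ in 𝓝[Set.Ico 0 T'] t, ∀ x, ‖f τ x‖ ≤ B x := by
  obtain ⟨K, hK⟩ := hf t ht 4
  refine ⟨fun x => K * jb x ^ (-(4:ℝ)), (integrable_jb (by norm_num)).const_mul K, ?_⟩
  filter_upwards [hK] with τ h x
  have h0 := jb_pos x
  have h1 := h x
  have e : jb x ^ (-(4:ℝ)) = (jb x ^ 4)⁻¹ := by
    rw [Real.rpow_neg h0.le]; norm_cast
  rw [e, ← div_eq_mul_inv, le_div_iff₀ (by positivity), mul_comm]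
  exact h1

lemma four_cont {T' : ℝ} {f : ℝ → 𝓢(Plane, ℂ)} (hf : PB T' (fun t x => f t x))
    (hc : ∀ x, ContinuousOn (fun τ => f τ x) (Set.Ico 0 T')) (ξ : Plane) :
    ContinuousOn (fun τ => 𝓕 (f τ : Plane → ℂ) ξ) (Set.Ico 0 T') := by
  intro t ht
  obtain ⟨B, hB, hb⟩ := hf.int ht
  simp_rw [Real.fourier_eq]
  refine continuousWithinAt_of_dominated (bound := B) ?_ ?_ hB ?_
  · refine Filter.Eventually.of_forall fun τ => Continuous.aestronglyMeasurable ?_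
    have := (f τ).continuous
    have h2 := Real.continuous_fourierChar
    simp only [Circle.smul_def]
    fun_prop
  · filter_upwards [hb] with τ h
    refine Filter.Eventually.of_forall fun x => ?_
    simpa using h x
  · refine Filter.Eventually.of_forall fun x => ?_
    simp only [Circle.smul_def, smul_eq_mul]
    exact continuousWithinAt_const.mul (hc x t ht)

lemma four_deriv {T' : ℝ} {f g : ℝ → 𝓢(Plane, ℂ)}
    (hg : PB T' (fun t x => g t x))
    (hd : ∀ t ∈ Set.Ioo 0 T', ∀ x, HasDerivAt (fun τ => f τ x) (g t x) t) {t : ℝ}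
    (ht : t ∈ Set.Ioo 0 T') (ξ : Plane) :
    HasDerivAt (fun τ => 𝓕 (f τ : Plane → ℂ) ξ) (𝓕 (g t : Plane → ℂ) ξ) t := by
  obtain ⟨B, hB, hb⟩ := hg.int (Set.Ioo_subset_Ico_self ht)
  rw [nhdsWithin_eq_nhds.2 (Ico_mem_nhds ht.1 ht.2)] at hb
  have hm : ∀ h : 𝓢(Plane, ℂ), Continuous fun v => 𝐞 (-inner ℝ v ξ) • h v := fun h => by
    have := h.continuous
    have h2 := Real.continuous_fourierChar
    simp only [Circle.smul_def]
    fun_prop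
  simp_rw [Real.fourier_eq]
  refine (hasDerivAt_integral_of_dominated_loc_of_deriv_le (bound := B)
    (s := {τ | (∀ x, ‖g τ x‖ ≤ B x) ∧ τ ∈ Set.Ioo 0 T'})
    (F' := fun τ v => 𝐞 (-inner ℝ v ξ) • g τ v) ?_ ?_ ?_ ?_ ?_ hB ?_).2
  · exact Filter.inter_mem hb (Ioo_mem_nhds ht.1 ht.2)
  · exact Filter.Eventually.of_forall fun τ => (hm _).aestronglyMeasurable
  · exact (Real.fourierIntegral_convergent_iff ξ).2 (f t).integrable
  · exact (hm _).aestronglyMeasurable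
  · refine Filter.Eventually.of_forall fun x τ hτ => ?_
    simpa using hτ.1 x
  · refine Filter.Eventually.of_forall fun x τ hτ => ?_
    simp only [Circle.smul_def, smul_eq_mul]
    exact (hd τ hτ.2 x).const_mul _

/-- Unit coordinate vectors. -/
abbrev ee (i : Fin 2) : Plane := EuclideanSpace.single i 1

/-- Pointwise product of Schwartz functions. -/
def mulS (f g : 𝓢(Plane, ℂ)) : 𝓢(Plane, ℂ) := SchwartzMap.pairing (ContinuousLinearMap.mul ℂ ℂ) f g

lemma mulS_apply (f g : 𝓢(Plane, ℂ)) (x : Plane) : mulS f g x = f x * g x := rfl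

lemma four_D (f : 𝓢(Plane, ℂ)) (i : Fin 2) (ξ : Plane) :
    𝓕 (∂_{ee i} f : 𝓢(Plane, ℂ)) ξ = (2 * π * Complex.I) * ((ξ i : ℝ) : ℂ) * 𝓕 f ξ := by
  have : (fun x : Plane => inner ℝ x (ee i)).HasTemperateGrowth :=
    ((innerSL ℝ).flip (ee i)).hasTemperateGrowth
  rw [SchwartzMap.fourier_lineDerivOp_eq, SchwartzMap.smul_apply,
    SchwartzMap.smulLeftCLM_apply_apply this]
  simp [EuclideanSpace.inner_single_right, mul_assoc]

lemma four_mul (f g : 𝓢(Plane, ℂ)) (ξ : Plane) :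
    𝓕 (mulS f g) ξ = ∫ η, 𝓕 f (ξ - η) * 𝓕 g η := by
  set H := SchwartzMap.convolution (ContinuousLinearMap.mul ℂ ℂ) (𝓕 g) (𝓕 f) with hH
  have h1 : 𝓕⁻ H = mulS f g := by
    ext x
    have e (h : 𝓢(Plane, ℂ)) : 𝓕⁻ h x = 𝓕 h (-x) := by
      rw [SchwartzMap.fourierInv_coe, Real.fourierInv_eq_fourier_neg, SchwartzMap.fourier_coe]
    rw [e, hH, SchwartzMap.fourier_convolution, SchwartzMap.pairing_apply_apply, ← e, ← e]
    simp [mulS_apply, mul_comm]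
  rw [← h1, FourierTransform.fourier_fourierInv_eq, hH, SchwartzMap.convolution_apply, convolution_def]
  simp [mul_comm]

lemma conv_int (f g : 𝓢(Plane, ℂ)) (ξ : Plane) : Integrable fun η => f (ξ - η) * g η := by
  refine g.integrable.bdd_mul (c := SchwartzMap.seminorm ℝ 0 0 f) ?_ ?_
  · have := f.continuous
    exact Continuous.aestronglyMeasurable (by fun_prop)
  · exact Filter.Eventually.of_forall fun x => SchwartzMap.norm_le_seminorm ℝ f _

/-- The Poisson bracket on Schwartz functions. -/
def br (f g : 𝓢(Plane, ℂ)) : 𝓢(Plane, ℂ) :=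
  mulS (∂_{ee 1} f) (∂_{ee 0} g) - mulS (∂_{ee 0} f) (∂_{ee 1} g)

/-- The Laplacian on Schwartz functions. -/
def lapS {F : Type*} [NormedAddCommGroup F] [NormedSpace ℝ F] (f : 𝓢(Plane, F)) : 𝓢(Plane, F) :=
  ∂_{ee 0} (∂_{ee 0} f) + ∂_{ee 1} (∂_{ee 1} f)

lemma norm_sq_plane (ξ : Plane) : ‖ξ‖ ^ 2 = ξ 0 ^ 2 + ξ 1 ^ 2 := by
  rw [EuclideanSpace.norm_sq_eq]; simp

lemma four_lap (f : 𝓢(Plane, ℂ)) (ξ : Plane) :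
    𝓕 (lapS f) ξ = -((kap * ‖ξ‖ ^ 2 : ℝ) : ℂ) * 𝓕 f ξ := by
  rw [lapS, FourierTransform.fourier_add, SchwartzMap.add_apply, four_D, four_D, four_D, four_D,
    norm_sq_plane, kap]
  push_cast
  linear_combination (4 * π ^ 2 * ((ξ 0 : ℂ) ^ 2 + (ξ 1 : ℂ) ^ 2) * 𝓕 f ξ) * Complex.I_sq

lemma four_br (f g : 𝓢(Plane, ℂ)) (ξ : Plane) :
    𝓕 (br f g) ξ = (kap : ℂ) * Q (fun η => 𝓕 f η) (fun η => 𝓕 g η) ξ := by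
  rw [br, sub_eq_add_neg, FourierTransform.fourier_add, FourierTransform.fourier_neg,
    SchwartzMap.add_apply, SchwartzMap.neg_apply, ← sub_eq_add_neg, four_mul, four_mul,
    ← integral_sub (conv_int _ _ _) (conv_int _ _ _), Q, ← integral_const_mul]
  congr 1
  ext η
  rw [four_D, four_D, four_D, four_D, wd, kap, PiLp.sub_apply, PiLp.sub_apply]
  push_cast
  linear_combination (4 * π ^ 2 * ((ξ 1 - η 1 : ℂ) * η 0 - (ξ 0 - η 0) * η 1) * 𝓕 f (ξ - η) * 𝓕 g η) * Complex.I_sq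
open scoped ENNReal ComplexConjugate Topology SchwartzMap LineDeriv

/-- Complexification of a real Schwartz function. -/
def cx (f : 𝓢(Plane, ℝ)) : 𝓢(Plane, ℂ) := f.postcompCLM Complex.ofRealCLM

lemma cx_apply (f : 𝓢(Plane, ℝ)) (x : Plane) : cx f x = (f x : ℂ) := rfl

lemma cx_D (f : 𝓢(Plane, ℝ)) (i : Fin 2) : (∂_{ee i} (cx f) : 𝓢(Plane, ℂ)) = cx (∂_{ee i} f) := by
  ext x
  rw [cx_apply, SchwartzMap.lineDerivOp_apply_eq_fderiv, SchwartzMap.lineDerivOp_apply_eq_fderiv]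
  have h := (f.differentiableAt (x := x)).hasFDerivAt
  have h2 : HasFDerivAt (cx f) (Complex.ofRealCLM.comp (fderiv ℝ f x)) x :=
    Complex.ofRealCLM.hasFDerivAt.comp x h
  rw [h2.fderiv]; rfl

lemma pd_eq (f : 𝓢(Plane, ℝ)) (i : Fin 2) : pd i f = ⇑(∂_{ee i} f : 𝓢(Plane, ℝ)) := rfl

lemma lap_eq (f : 𝓢(Plane, ℝ)) : lap f = ⇑(lapS f) := rfl

lemma cx_lap (f : 𝓢(Plane, ℝ)) : lapS (cx f) = cx (lapS f) := by
  rw [lapS, cx_D, cx_D, cx_D, cx_D]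
  ext x
  simp [lapS, cx_apply]

lemma LB_cx {T' : ℝ} {a : ℝ → 𝓢(Plane, ℝ)} (h : LB T' a) : LB T' (fun t => cx (a t)) :=
  h.clm (SchwartzMap.postcompCLM Complex.ofRealCLM)

lemma LB_D {T' : ℝ} {a : ℝ → 𝓢(Plane, ℂ)} (h : LB T' a) (i : Fin 2) :
    LB T' (fun t => (∂_{ee i} (a t) : 𝓢(Plane, ℂ))) :=
  h.clm (LineDeriv.lineDerivOpCLM ℝ 𝓢(Plane, ℂ) (ee i))

lemma LB_lap {T' : ℝ} {a : ℝ → 𝓢(Plane, ℂ)} (h : LB T' a) : LB T' (fun t => lapS (a t)) :=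
  h.clm (LineDeriv.lineDerivOpCLM ℝ 𝓢(Plane, ℂ) (ee 0) ∘L LineDeriv.lineDerivOpCLM ℝ 𝓢(Plane, ℂ) (ee 0)
    + LineDeriv.lineDerivOpCLM ℝ 𝓢(Plane, ℂ) (ee 1) ∘L LineDeriv.lineDerivOpCLM ℝ 𝓢(Plane, ℂ) (ee 1))

lemma PB_br {T' : ℝ} {a b : ℝ → 𝓢(Plane, ℂ)} (ha : LB T' a) (hb : LB T' b) :
    PB T' (fun t x => br (a t) (b t) x) := by
  refine (((LB_D ha 1).pt.mul (LB_D hb 0).pt).add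
    (((LB_D ha 0).pt.mul (LB_D hb 1).pt).const_mul (-1))).congr fun t x => ?_
  have : br (a t) (b t) x = mulS (∂_{ee 1} (a t)) (∂_{ee 0} (b t)) x
    - mulS (∂_{ee 0} (a t)) (∂_{ee 1} (b t)) x := rfl
  rw [this, mulS_apply, mulS_apply]; ring

lemma herm_real (f : 𝓢(Plane, ℝ)) (ξ : Plane) :
    𝓕 (cx f : Plane → ℂ) (-ξ) = conj (𝓕 (cx f : Plane → ℂ) ξ) := by
  rw [Real.fourier_eq, Real.fourier_eq, ← integral_conj]
  congr 1
  ext x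
  simp [Circle.smul_def, cx_apply, Real.fourierChar_apply, ← Complex.exp_conj, inner_neg_right,
    Complex.conj_ofNat]

lemma slice_cont {T' : ℝ} {a : ℝ → 𝓢(Plane, ℝ)}
    (h : ContDiffOn ℝ (⊤ : ℕ∞) (fun q : ℝ × Plane => a q.1 q.2) (Set.Ico 0 T' ×ˢ Set.univ)) (x : Plane) :
    ContDiffOn ℝ (⊤ : ℕ∞) (fun τ => a τ x) (Set.Ico 0 T') := by
  have h1 : ContDiffOn ℝ (⊤ : ℕ∞) (fun τ : ℝ => (τ, x)) (Set.Ico 0 T') :=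
    (contDiff_id.prodMk contDiff_const).contDiffOn
  exact h.comp h1 fun τ hτ => ⟨hτ, trivial⟩

lemma slice_deriv {T' : ℝ} {a : ℝ → 𝓢(Plane, ℝ)}
    (h : ContDiffOn ℝ (⊤ : ℕ∞) (fun q : ℝ × Plane => a q.1 q.2) (Set.Ico 0 T' ×ˢ Set.univ)) (x : Plane)
    {t : ℝ} (ht : t ∈ Set.Ioo 0 T') :
    HasDerivAt (fun τ => cx (a τ) x) ((derivWithin (fun τ => a τ x) (Set.Ico 0 T') t : ℝ) : ℂ) t := by
  have h1 := ((slice_cont h x).differentiableOn (by simp)) t (Set.Ioo_subset_Ico_self ht)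
  exact (h1.hasDerivWithinAt.hasDerivAt (Ico_mem_nhds ht.1 ht.2)).ofReal_comp

lemma LB_of {T' : ℝ} {a : ℝ → 𝓢(Plane, ℝ)} (h : ∀ t ∈ Set.Ico 0 T', ∀ k n : ℕ, ∃ δ > 0, ∃ K : ℝ,
        ∀ τ ∈ Set.Ico 0 T', |τ - t| < δ → SchwartzMap.seminorm ℝ k n (a τ) ≤ K) : LB T' a := by
  intro t ht k n
  obtain ⟨δ, hδ, K, hK⟩ := h t ht k n
  refine ⟨K, ?_⟩
  filter_upwards [self_mem_nhdsWithin, mem_nhdsWithin_of_mem_nhds (Metric.ball_mem_nhds t hδ)]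
    with τ h1 h2
  exact hK τ h1 (by simpa [Real.dist_eq] using h2)

lemma dec_of {T' : ℝ} {a b : ℝ → 𝓢(Plane, ℂ)} (ha : LB T' a) (hb : LB T' b) :
    ∀ t ∈ Set.Ico 0 T', ∀ n : ℕ, ∃ δ > 0, ∃ K : ℝ, ∀ τ ∈ Set.Ico 0 T', |τ - t| < δ →
      ∀ ξ : Plane, jb ξ ^ n * ‖𝓕 (a τ : Plane → ℂ) ξ‖ ≤ K ∧ jb ξ ^ n * ‖𝓕 (b τ : Plane → ℂ) ξ‖ ≤ K := by
  intro t ht n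
  obtain ⟨K, hK⟩ := (ha.clm (FourierTransform.fourierCLM ℝ 𝓢(Plane, ℂ))).pt t ht n
  obtain ⟨K', hK'⟩ := (hb.clm (FourierTransform.fourierCLM ℝ 𝓢(Plane, ℂ))).pt t ht n
  obtain ⟨δ, hδ, h⟩ := Metric.mem_nhdsWithin_iff.1 (hK.and hK')
  refine ⟨δ, hδ, max K K', fun τ hτ hd ξ => ?_⟩
  have := h ⟨by simpa [Real.dist_eq] using hd, hτ⟩
  exact ⟨(this.1 ξ).trans (le_max_left _ _), (this.2 ξ).trans (le_max_right _ _)⟩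

lemma fsol_of {μ T' : ℝ} {a b : ℝ → 𝓢(Plane, ℝ)}
    (ha : ContDiffOn ℝ (⊤ : ℕ∞) (fun q : ℝ × Plane => a q.1 q.2) (Set.Ico 0 T' ×ˢ Set.univ))
    (hb : ContDiffOn ℝ (⊤ : ℕ∞) (fun q : ℝ × Plane => b q.1 q.2) (Set.Ico 0 T' ×ˢ Set.univ))
    (hl : ∀ t ∈ Set.Ico 0 T', ∀ k n : ℕ, ∃ δ > 0, ∃ K : ℝ,
        ∀ τ ∈ Set.Ico 0 T', |τ - t| < δ →
          SchwartzMap.seminorm ℝ k n (a τ) ≤ K ∧ SchwartzMap.seminorm ℝ k n (b τ) ≤ K)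
    (h1 : ∀ t ∈ Set.Ico 0 T', ∀ x : Plane,
        derivWithin (fun τ => a τ x) (Set.Ico 0 T') t
          + pd 1 (a t) x * pd 0 (b t) x - pd 0 (a t) x * pd 1 (b t) x = μ * lap (a t) x)
    (h2 : ∀ t ∈ Set.Ico 0 T', ∀ x : Plane,
        derivWithin (fun τ => b τ x) (Set.Ico 0 T') t
          - pd 1 (a t) x * pd 0 (lap (a t)) x + pd 0 (a t) x * pd 1 (lap (a t)) x = 0) :
    FSol μ T' (fun t ξ => 𝓕 (cx (a t) : Plane → ℂ) ξ) (fun t ξ => 𝓕 (cx (b t) : Plane → ℂ) ξ) := by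
  have la : LB T' (fun t => cx (a t)) := LB_cx (LB_of fun t ht k n => by
    obtain ⟨δ, hδ, K, hK⟩ := hl t ht k n
    exact ⟨δ, hδ, K, fun τ hτ h => (hK τ hτ h).1⟩)
  have lb : LB T' (fun t => cx (b t)) := LB_cx (LB_of fun t ht k n => by
    obtain ⟨δ, hδ, K, hK⟩ := hl t ht k n
    exact ⟨δ, hδ, K, fun τ hτ h => (hK τ hτ h).2⟩)
  constructor
  · exact fun t _ => (𝓕 (cx (a t))).continuous
  · exact fun t _ => (𝓕 (cx (b t))).continuous
  · exact fun t _ ξ => herm_real (a t) ξ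
  · exact dec_of la lb
  · intro t ht ξ
    have key := four_deriv (f := fun t => cx (a t))
      (g := fun t => (μ : ℂ) • lapS (cx (a t)) - br (cx (a t)) (cx (b t)))
      (((LB_lap la).pt.const_mul μ).add ((PB_br la lb).const_mul (-1)) |>.congr fun t x => by
        simp; ring) (fun t ht x => by
        have e := slice_deriv ha x ht
        convert e using 1
        have h := h1 t (Set.Ioo_subset_Ico_self ht) x
        rw [pd_eq, pd_eq, pd_eq, pd_eq, lap_eq] at h
        have h' := congrArg (fun r : ℝ => (r : ℂ)) h
        push_cast at h'
        rw [br, cx_D, cx_D, cx_D, cx_D, cx_lap]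
        simp only [sub_apply, smul_apply, mulS_apply, cx_apply, smul_eq_mul]
        linear_combination -h') ht ξ
    convert key using 1
    simp only [← SchwartzMap.fourier_coe]
    rw [sub_eq_add_neg, FourierTransform.fourier_add,
      FourierTransform.fourier_neg, FourierTransform.fourier_smul, add_apply, neg_apply, smul_apply,
      four_br, four_lap, rhsA, smul_eq_mul]
    push_cast
    ring
  · intro t ht ξ
    have key := four_deriv (f := fun t => cx (b t))
      (g := fun t => br (cx (a t)) (lapS (cx (a t)))) (PB_br la (LB_lap la)) (fun t ht x => by
        have e := slice_deriv hb x ht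
        convert e using 1
        have h := h2 t (Set.Ioo_subset_Ico_self ht) x
        rw [lap_eq, pd_eq, pd_eq, pd_eq, pd_eq] at h
        have h' := congrArg (fun r : ℝ => (r : ℂ)) h
        push_cast at h'
        rw [br, cx_lap, cx_D, cx_D, cx_D, cx_D]
        simp only [sub_apply, mulS_apply, cx_apply]
        linear_combination -h') ht ξ
    convert key using 1
    simp only [← SchwartzMap.fourier_coe]
    rw [four_br, rhsB, Q, Q, ← integral_const_mul, ← integral_const_mul]
    congr 1
    ext η
    rw [four_lap]
    push_cast
    ring
  · refine four_cont la.pt fun x => ?_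
    exact Complex.continuous_ofReal.comp_continuousOn (slice_cont ha x).continuousOn
  · refine four_cont lb.pt fun x => ?_
    exact Complex.continuous_ofReal.comp_continuousOn (slice_cont hb x).continuousOn

lemma sobNorm_sq (s : ℝ) (f : 𝓢(Plane, ℝ)) :
    sobNorm s f ^ 2 = ∫ ξ : Plane, jb ξ ^ (2 * s) * ‖𝓕 (cx f : Plane → ℂ) ξ‖ ^ 2 := by
  have h0 : 0 ≤ ∫ ξ : Plane, (1 + ‖ξ‖ ^ 2) ^ s * ‖𝓕 (fun x => (f x : ℂ)) ξ‖ ^ 2 :=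
    integral_nonneg fun ξ => by positivity
  rw [sobNorm, ← Real.rpow_natCast, ← Real.rpow_mul h0]
  norm_num
  congr 1
  ext ξ
  rw [rpow_jb]; rfl

lemma En_eq (s : ℝ) (a b : ℝ → 𝓢(Plane, ℝ)) (t : ℝ) :
    En s (fun t ξ => 𝓕 (cx (a t) : Plane → ℂ) ξ) (fun t ξ => 𝓕 (cx (b t) : Plane → ℂ) ξ) t
      = kap * sobNorm (s+1) (a t) ^ 2 + sobNorm s (b t) ^ 2 := by
  rw [sobNorm_sq, sobNorm_sq, En, show 2 * (s + 1) = 2 * s + 2 by ring]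

/-- Uniform Sobolev bound on a short time interval for the 2½D electron MHD system with
horizontal resistivity `μ > 0` (and `ν = 0`): for `s > 2`, `μ > 0`, `M > 0` there exist
`T > 0` and `C ≥ 1` (depending only on `s, μ, M`) such that any smooth solution on
`[0,T')` that is Schwartz in space (with Schwartz seminorms locally bounded in time)
with `‖a(0)‖_{H^{s+1}}² + ‖b(0)‖_{H^s}² ≤ M` satisfies
`‖a(t)‖_{H^{s+1}}² + ‖b(t)‖_{H^s}² ≤ C(‖a(0)‖_{H^{s+1}}² + ‖b(0)‖_{H^s}²)` on
`[0, min(T,T'))`. -/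
theorem emhd_uniform_sobolev_bound_horizontal
    (s μ M : ℝ) (hs : 2 < s) (hμ : 0 < μ) (hM : 0 < M) :
    ∃ T : ℝ, 0 < T ∧ ∃ C : ℝ, 1 ≤ C ∧
      ∀ T' : ℝ, 0 < T' →
      ∀ a b : ℝ → SchwartzMap Plane ℝ,
      ContDiffOn ℝ (⊤ : ℕ∞) (fun q : ℝ × Plane => a q.1 q.2) (Set.Ico 0 T' ×ˢ Set.univ) →
      ContDiffOn ℝ (⊤ : ℕ∞) (fun q : ℝ × Plane => b q.1 q.2) (Set.Ico 0 T' ×ˢ Set.univ) →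
      (∀ t ∈ Set.Ico 0 T', ∀ k n : ℕ, ∃ δ > 0, ∃ K : ℝ,
        ∀ τ ∈ Set.Ico 0 T', |τ - t| < δ →
          SchwartzMap.seminorm ℝ k n (a τ) ≤ K ∧ SchwartzMap.seminorm ℝ k n (b τ) ≤ K) →
      (∀ t ∈ Set.Ico 0 T', ∀ x : Plane,
        derivWithin (fun τ => a τ x) (Set.Ico 0 T') t
          + pd 1 (a t) x * pd 0 (b t) x - pd 0 (a t) x * pd 1 (b t) x = μ * lap (a t) x) →
      (∀ t ∈ Set.Ico 0 T', ∀ x : Plane,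
        derivWithin (fun τ => b τ x) (Set.Ico 0 T') t
          - pd 1 (a t) x * pd 0 (lap (a t)) x + pd 0 (a t) x * pd 1 (lap (a t)) x = 0) →
      sobNorm (s+1) (⇑(a 0)) ^ 2 + sobNorm s (⇑(b 0)) ^ 2 ≤ M →
      ∀ t : ℝ, 0 ≤ t → t < min T T' →
        sobNorm (s+1) (⇑(a t)) ^ 2 + sobNorm s (⇑(b t)) ^ 2
          ≤ C * (sobNorm (s+1) (⇑(a 0)) ^ 2 + sobNorm s (⇑(b 0)) ^ 2) := by
  have k1 := one_le_kap
  obtain ⟨T, hT, H⟩ := fourier_bound s μ (kap * M) hs hμ (by positivity)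
  refine ⟨T, hT, 4 * kap, by linarith, ?_⟩
  intro T' hT' a b ha hb hl h1 h2 h0 t ht0 ht
  have h := H T' _ _ (fsol_of ha hb hl h1 h2)
  simp only [En_eq] at h
  have p1 := sq_nonneg (sobNorm (s+1) (a 0))
  have p2 := sq_nonneg (sobNorm s (b 0))
  have p3 := sq_nonneg (sobNorm (s+1) (a t))
  have h := h (by nlinarith) t ht0 ht
  nlinarith
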